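/- Let (A, φ) be a noncommutative probability space with monotone cumulants {h_n} and free cumulants {r_n}. Then for every n ≥ 1 and all a_1,…,a_n ∈ A, h_n(a_1,…,a_n) = Σ_{π ∈ NC_irr(n)} (−1)^{|π|−1} ω(t(π)) · r_π(a_1,…,a_n). -/

import Mathlib

open scoped BigOperators

/-- Planar rooted trees (rose trees). -/
inductive PTree : Type
  | node : List PTree → PTree

namespace PTree

/-- The single-vertex tree (a leaf). -/
abbrev leaf : PTree := .node []

/-- Subtree at a given path from the root (entries select children). -/
def subtreeAt : List ℕ → PTree → Option PTree
  | [], t => some t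
  | i :: p, node cs => (cs[i]?).bind (subtreeAt p)

/-- `p` is (the path of) a vertex of `t`. -/
def IsVertex (t : PTree) (p : List ℕ) : Prop := (subtreeAt p t).isSome

/-- `p` is a leaf of `t`. -/
def IsLeafAt (t : PTree) (p : List ℕ) : Prop := subtreeAt p t = some leaf

/-- `p` is an internal (non-leaf) vertex of `t`. -/
def IsInternalAt (t : PTree) (p : List ℕ) : Prop :=
  ∃ cs, subtreeAt p t = some (node cs) ∧ cs ≠ []

/-- Schröder trees: every internal vertex has at least two children. -/
inductive IsSchroder : PTree → Prop
  | leaf : IsSchroder (node [])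
  | node (cs : List PTree) : 2 ≤ cs.length → (∀ c ∈ cs, IsSchroder c) → IsSchroder (node cs)

/-- Number of leaves of a tree. -/
noncomputable def numLeaves (t : PTree) : ℕ := Nat.card {p : List ℕ // IsLeafAt t p}

/-- Number of sectors between consecutive leaves. -/
noncomputable def numSectors (t : PTree) : ℕ := numLeaves t - 1

/-- Number of internal vertices. -/
noncomputable def numInternal (t : PTree) : ℕ := Nat.card {p : List ℕ // IsInternalAt t p}

/-- The set of Schröder trees with `n+1` leaves. -/
def ST (n : ℕ) : Set PTree := {t | IsSchroder t ∧ numLeaves t = n + 1}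

/-- Number of surjective strictly order-preserving maps from the poset of internal
vertices of `t` (i.e. the vertex poset of the skeleton `sk(t)`, with the root minimal,
the order being the ancestor/prefix order) onto `{1, …, k}`. This is `ω_k(sk(t))`. -/
noncomputable def omegaSkK (t : PTree) (k : ℕ) : ℕ :=
  Nat.card {f : {p : List ℕ // IsInternalAt t p} → Fin k //
    Function.Surjective f ∧ ∀ v w, v.1 <+: w.1 → v ≠ w → f v < f w}

/-- The Murua coefficient `ω(sk(t))` of the skeleton of `t`. -/
noncomputable def omegaSk (t : PTree) : ℂ :=
  ∑ k ∈ Finset.Icc 1 (numInternal t), ((-1 : ℂ) ^ (k + 1) / (k : ℂ)) * (omegaSkK t k : ℂ)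

/-- The subtree of `t` at path `p` (junk value: a leaf). -/
noncomputable def subtree! (t : PTree) (p : List ℕ) : PTree := (subtreeAt p t).getD leaf

/-- Number of leaves of `t` strictly to the left of the subtree at `p`. -/
noncomputable def leavesBefore (t : PTree) (p : List ℕ) : ℕ :=
  Nat.card {q : List ℕ // IsLeafAt t q ∧ List.Lex (· < ·) q p ∧ ¬ p <+: q}

/-- Sector number `i` (0-indexed: the sector between the `(i+1)`-st and `(i+2)`-nd leaves of `t`)
lies strictly inside the subtree of `t` rooted at `p`. -/
def SectorIn (t : PTree) (p : List ℕ) (i : ℕ) : Prop :=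
  leavesBefore t p ≤ i ∧ i + 2 ≤ leavesBefore t p + numLeaves (subtree! t p)

/-- The internal vertex `v` of `t` owns sector `i`: the sector lies in the corolla at `v`,
i.e. inside the subtree at `v` but not inside the subtree at any strictly deeper vertex. -/
def OwnsSector (t : PTree) (v : List ℕ) (i : ℕ) : Prop :=
  IsInternalAt t v ∧ SectorIn t v i ∧
    ∀ w, IsInternalAt t w → v <+: w → w ≠ v → ¬ SectorIn t w i

/-- Sectors `i` and `j` belong to the same block of the noncrossing partition `π(t)`. -/
def SameOwner (t : PTree) (i j : ℕ) : Prop := ∃ v, OwnsSector t v i ∧ OwnsSector t v j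

open Classical in
/-- `φ_{π(t)}(a_1,…,a_n)`: the product over the blocks of the noncrossing partition `π(t)`
(one block per internal vertex `v`, consisting of the sectors owned by `v`) of `φ` applied to
the ordered product of the corresponding letters of `w`. -/
noncomputable def phiPi {A : Type*} [Ring A] (φ : A → ℂ) (t : PTree) (w : List A) : ℂ :=
  ∏ᶠ v ∈ {v : List ℕ | IsInternalAt t v},
    φ ((((List.range w.length).filter fun i => OwnsSector t v i).map fun i => w.getD i 0).prod)

/-- A corolla: a root whose (at least two) children are all leaves. -/
def corolla (m : ℕ) : PTree := node (List.replicate m leaf)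

/-- `t` is a corolla. -/
def IsCorolla (t : PTree) : Prop := ∃ m, 2 ≤ m ∧ t = corolla m

/-- Graft a tree `s` onto the leftmost leaf of `t`. -/
def graftLeftmost : PTree → PTree → PTree
  | node [], s => s
  | node (c :: cs), s => node (graftLeftmost c s :: cs)

/-- Trees obtained from the single-vertex tree by repeatedly grafting a corolla
onto the leftmost leaf. -/
inductive IsBST : PTree → Prop
  | single : IsBST leaf
  | graft (t : PTree) (m : ℕ) : IsBST t → 2 ≤ m → IsBST (graftLeftmost t (corolla m))

/-- Schröder trees whose leftmost child of the root is a leaf. -/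
def IsPST (t : PTree) : Prop := ∃ cs, t = node (leaf :: cs)

end PTree
section Partitions

open scoped BigOperators

/-- Set partitions of `[n] = {1,…,n}`, modeled as finpartitions of `Fin n`. -/
abbrev NPart (n : ℕ) := Finpartition (Finset.univ : Finset (Fin n))

/-- Noncrossing partitions: there are no `a < b < c < d` with `a, c` in one block and
`b, d` in a different block. -/
def IsNoncrossing {n : ℕ} (π : NPart n) : Prop :=
  ∀ a b c d : Fin n, a < b → b < c → c < d →
    ∀ V ∈ π.parts, ∀ W ∈ π.parts, a ∈ V → c ∈ V → b ∈ W → d ∈ W → V = W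

/-- Interval partitions: every block is an interval of consecutive elements. -/
def IsIntervalPart {n : ℕ} (π : NPart n) : Prop :=
  ∀ V ∈ π.parts, ∀ x ∈ V, ∀ y ∈ V, ∀ z : Fin n, x ≤ z → z ≤ y → z ∈ V

/-- Irreducible noncrossing partitions: `1` and `n` lie in the same block. -/
def IsIrreducibleNC {n : ℕ} (π : NPart n) : Prop :=
  ∃ V ∈ π.parts, (∀ i : Fin n, i.val = 0 → i ∈ V) ∧ (∀ i : Fin n, i.val = n - 1 → i ∈ V)

/-- `W` is nested in `V`: every element of `W` lies in the interval `[min V, max V]`. -/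
def NestedIn {n : ℕ} (W V : Finset (Fin n)) : Prop :=
  ∀ w ∈ W, (∃ a ∈ V, a ≤ w) ∧ (∃ b ∈ V, w ≤ b)

open Classical in
/-- The forest factorial `t(π)!` of the forest of nestings of `π`: the product, over all
blocks `V`, of the number of blocks nested in `V` (the size of the subtree rooted at `V`). -/
noncomputable def forestFactorial {n : ℕ} (π : NPart n) : ℕ :=
  ∏ V ∈ π.parts, (π.parts.filter fun W => NestedIn W V).card

/-- `f_π(a_1,…,a_n)`: the product over the blocks `V = {i_1 < … < i_s}` of `π` of
`f(a_{i_1},…,a_{i_s})`, for a family of multilinear functionals encoded as `f : List A → ℂ`. -/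
noncomputable def blockApply {A : Type*} {n : ℕ} (f : List A → ℂ) (a : Fin n → A)
    (π : NPart n) : ℂ :=
  ∏ V ∈ π.parts, f ((V.sort (· ≤ ·)).map a)

/-- `φ_π(a_1,…,a_n)` for the moment functionals `φ_m(a_1,…,a_m) = φ(a_1 ⋯ a_m)`. -/
noncomputable def momApply {A : Type*} [Ring A] {n : ℕ} (φ : A → ℂ) (a : Fin n → A)
    (π : NPart n) : ℂ :=
  blockApply (fun l => φ l.prod) a π

/-- `ω_k(t(π))` for the nesting poset of the blocks of `π` (for irreducible `π`, this is
the vertex poset of the tree of nestings, rooted at the outermost block): the number of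
surjective strictly order-preserving maps onto `{1,…,k}`. -/
noncomputable def omegaNestK {n : ℕ} (π : NPart n) (k : ℕ) : ℕ :=
  Nat.card {f : {V // V ∈ π.parts} → Fin k // Function.Surjective f ∧
    ∀ V W : {V // V ∈ π.parts}, NestedIn W.1 V.1 → V ≠ W → f V < f W}

/-- The Murua coefficient `ω(t(π))` of the tree (forest) of nestings of `π`. -/
noncomputable def omegaNest {n : ℕ} (π : NPart n) : ℂ :=
  ∑ k ∈ Finset.Icc 1 π.parts.card, ((-1 : ℂ) ^ (k + 1) / (k : ℂ)) * (omegaNestK π k : ℂ)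

/-- The noncrossing partition `π(t)` associated to a Schröder tree `t ∈ ST(n)` equals `π`:
two sectors lie in the same block of `π(t)` (i.e. have the same owning internal vertex)
iff they lie in the same block of `π`. -/
def TreePartEq {n : ℕ} (t : PTree) (π : NPart n) : Prop :=
  ∀ i j : Fin n, PTree.SameOwner t i.val j.val ↔ ∃ V ∈ π.parts, i ∈ V ∧ j ∈ V

/-- The moment–cumulant relation defining the monotone cumulants `h`. -/
def MonotoneMC {A : Type*} [Ring A] (φ : A → ℂ) (h : List A → ℂ) : Prop :=
  ∀ (m : ℕ), 1 ≤ m → ∀ a : Fin m → A,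
    φ (List.ofFn a).prod =
      ∑ᶠ π ∈ {π : NPart m | IsNoncrossing π}, (forestFactorial π : ℂ)⁻¹ * blockApply h a π

/-- The moment–cumulant relation defining the free cumulants `r`. -/
def FreeMC {A : Type*} [Ring A] (φ : A → ℂ) (r : List A → ℂ) : Prop :=
  ∀ (m : ℕ), 1 ≤ m → ∀ a : Fin m → A,
    φ (List.ofFn a).prod = ∑ᶠ π ∈ {π : NPart m | IsNoncrossing π}, blockApply r a π

/-- The moment–cumulant relation defining the Boolean cumulants `b`. -/
def BooleanMC {A : Type*} [Ring A] (φ : A → ℂ) (b : List A → ℂ) : Prop :=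
  ∀ (m : ℕ), 1 ≤ m → ∀ a : Fin m → A,
    φ (List.ofFn a).prod = ∑ᶠ π ∈ {π : NPart m | IsIntervalPart π}, blockApply b a π

end Partitions

/-!
For each subset `S` of the positions of a word, put `p_S(t) = ∑_{P ∈ NC(S)} f_P Ψ_P(t)`, where `Ψ_P`
depends on the forest of nestings of `P` only, is multiplicative, and loses a root under a delta
operator `L`. As `L` commutes with the derivative and kills exactly the constants, induction on the
forest `F` gives `Ψ_F' = ∑_v Ψ_{F_v}'(0) Ψ_{F ∖ F_v}`, where `F_v` is the subtree at `v`. Cutting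
the subtree at a block off a noncrossing partition of `S` amounts to choosing an interval `J` of
`S`, an irreducible noncrossing partition of `J` and a noncrossing partition of `S ∖ J`, so that
`p_S' = ∑_J g_J p_{S ∖ J}` with `g_J = ∑_{Q ∈ NC_irr(J)} f_Q Ψ_Q'(0)`. Hence, for a fixed `c ≠ 0`,
the values `p_S(c)` determine all `p_S` and all `g_S`, whatever `L` is.

Take `c = -1`. For `Ψ_F = t^|F| / F!`, `L = d/dt` and `f = -h`, the value `p_S(-1)` is the moment of
`S` expanded in monotone cumulants, and `g_S = -h_S`. For the strict order polynomial `Ψ_F = Ω_F`,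
the forward difference `L` and `f = -r`, it is the moment expanded in free cumulants, since
`Ω_F(-1) = (-1)^|F|`; and `g_S` is minus the sum in the theorem, since `Ω_F'(0) = ω(F)`.
-/

section DeltaOperators

open Polynomial

variable {K : Type*}

theorem polynomial_eq_of_eval_natCast_eq [CommRing K] [IsDomain K] [CharZero K] {p q : K[X]}
    (h : ∀ m : ℕ, p.eval (m : K) = q.eval (m : K)) : p = q :=
  eq_of_infinite_eval_eq p q <|
    (Set.infinite_range_of_injective (Nat.cast_injective (R := K))).mono <| by
      rintro _ ⟨m, rfl⟩
      exact h m

theorem descPochhammer_eval_neg_one [CommRing K] (k : ℕ) :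
    (descPochhammer K k).eval (-1) = (-1) ^ k * (k.factorial : K) := by
  induction k with
  | zero => simp
  | succ k ih =>
    rw [descPochhammer_succ_eval, ih, Nat.factorial_succ]
    push_cast
    ring

theorem descPochhammer_succ_coeff_one [CommRing K] (k : ℕ) :
    (descPochhammer K (k + 1)).coeff 1 = (-1) ^ k * (k.factorial : K) := by
  rw [descPochhammer_succ_left, coeff_X_mul, coeff_zero_eq_eval_zero, eval_comp]
  simp [descPochhammer_eval_neg_one]

theorem eq_of_derivative_eq_C_add [CommRing K] [IsDomain K] [CharZero K] {p q u : K[X]}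
    {a b c : K} (hp : derivative p = C a + u) (hq : derivative q = C b + u) (hc : c ≠ 0)
    (h0 : p.coeff 0 = q.coeff 0) (hpq : p.eval c = q.eval c) : p = q := by
  have hder : derivative (p - q - C (a - b) * X) = 0 := by
    rw [derivative_sub, derivative_sub, hp, hq, derivative_C_mul, derivative_X, C_sub]
    ring
  have hlin : p - q - C (a - b) * X = 0 := by
    rw [eq_C_of_natDegree_eq_zero (derivative_eq_zero.1 hder)]
    simp [h0]
  have hab : a - b = 0 := by
    simpa [hpq, hc] using congrArg (eval c) hlin
  rw [hab, C_0, zero_mul, sub_zero] at hlin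
  exact sub_eq_zero.1 hlin

/-- Delta operators in the sense of Rota. In characteristic zero, the shift-invariant linear
operators on polynomials are those commuting with the derivative, and among these the delta
operators are those whose kernel consists of the constants. -/
structure IsDeltaOperator [Field K] (L : K[X] →ₗ[K] K[X]) : Prop where
  derivative_comm : ∀ p, derivative (L p) = L (derivative p)
  map_eq_zero_iff : ∀ p, L p = 0 ↔ p.natDegree = 0

theorem IsDeltaOperator.eq_of_map_eq_of_coeff_zero_eq [Field K] {L : K[X] →ₗ[K] K[X]}
    (hL : IsDeltaOperator L) {p q : K[X]} (h : L p = L q) (h0 : p.coeff 0 = q.coeff 0) :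
    p = q := by
  have hconst : (p - q).natDegree = 0 := (hL.map_eq_zero_iff _).1 (by rw [map_sub, h, sub_self])
  rw [← sub_eq_zero, eq_C_of_natDegree_eq_zero hconst, coeff_sub, h0, sub_self, C_0]

theorem IsDeltaOperator.map_C [Field K] {L : K[X] →ₗ[K] K[X]} (hL : IsDeltaOperator L) (a : K) :
    L (C a) = 0 :=
  (hL.map_eq_zero_iff _).2 (natDegree_C a)

theorem isDeltaOperator_derivative [Field K] [CharZero K] :
    IsDeltaOperator (derivative : K[X] →ₗ[K] K[X]) where
  derivative_comm _ := rfl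
  map_eq_zero_iff _ := derivative_eq_zero

/-- The forward difference operator `p(X) ↦ p(X + 1) - p(X)` on polynomials. -/
noncomputable def forwardDiff (K : Type*) [Field K] : K[X] →ₗ[K] K[X] :=
  taylor 1 - LinearMap.id

theorem forwardDiff_apply [Field K] (p : K[X]) : forwardDiff K p = taylor 1 p - p := rfl

theorem isDeltaOperator_forwardDiff [Field K] [CharZero K] : IsDeltaOperator (forwardDiff K) where
  derivative_comm p := by
    simp [forwardDiff_apply, taylor_apply, derivative_comp]
  map_eq_zero_iff p := by
    refine ⟨fun hp => ?_, fun hp => ?_⟩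
    · suffices p = C (p.eval 0) by rw [this, natDegree_C]
      refine polynomial_eq_of_eval_natCast_eq fun m => ?_
      rw [eval_C]
      induction m with
      | zero => rw [Nat.cast_zero]
      | succ m ih =>
        have hm := congrArg (eval (m : K)) hp
        rw [forwardDiff_apply, eval_sub, taylor_eval, eval_zero, sub_eq_zero, ih] at hm
        exact_mod_cast hm
    · rw [forwardDiff_apply, eq_C_of_natDegree_eq_zero hp, taylor_C, sub_self]

end DeltaOperators

section Forests

variable {β : Type*} {R : β → β → Prop} {r v w : β} {s s' t : Finset β}

/-- The strict relation `R`, where `R a b` means that `a` is an ancestor of `b`, makes `s` into a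
forest. -/
structure IsForestOn (R : β → β → Prop) (s : Finset β) : Prop where
  irrefl : ∀ a ∈ s, ¬ R a a
  trans : ∀ a ∈ s, ∀ b ∈ s, ∀ c ∈ s, R a b → R b c → R a c
  linear : ∀ a ∈ s, ∀ b ∈ s, ∀ c ∈ s, R a c → R b c → a = b ∨ R a b ∨ R b a

theorem IsForestOn.mono (ht : IsForestOn R t) (hst : s ⊆ t) : IsForestOn R s where
  irrefl a ha := ht.irrefl a (hst ha)
  trans a ha b hb c hc := ht.trans a (hst ha) b (hst hb) c (hst hc)
  linear a ha b hb c hc := ht.linear a (hst ha) b (hst hb) c (hst hc)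

theorem IsForestOn.exists_forall_not_rel (hs : IsForestOn R s) (hne : s.Nonempty) :
    ∃ r ∈ s, ∀ v ∈ s, ¬ R v r := by
  let R' : s → s → Prop := fun a b => R a b
  have : IsTrans s R' := ⟨fun a b c => hs.trans a a.2 b b.2 c c.2⟩
  have : Std.Irrefl R' := ⟨fun a => hs.irrefl a a.2⟩
  have hwf : WellFounded R' := Finite.wellFounded_of_trans_of_irrefl R'
  obtain ⟨r, -, hr⟩ := hwf.has_min Set.univ ⟨⟨_, hne.choose_spec⟩, trivial⟩
  exact ⟨r, r.2, fun v hv => hr ⟨v, hv⟩ trivial⟩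

/-- `s` and `t` are vertex sets with no common vertex and no relation between them, so that
`s ∪ t` is the disjoint union of the forests `s` and `t`. -/
structure Unrelated (R : β → β → Prop) (s t : Finset β) : Prop where
  disjoint : Disjoint s t
  not_rel : ∀ a ∈ s, ∀ b ∈ t, ¬ R a b
  not_rel' : ∀ a ∈ s, ∀ b ∈ t, ¬ R b a

theorem Unrelated.symm (h : Unrelated R s t) : Unrelated R t s where
  disjoint := h.disjoint.symm
  not_rel b hb a ha := h.not_rel' a ha b hb
  not_rel' b hb a ha := h.not_rel a ha b hb

theorem Unrelated.mono_left (h : Unrelated R s t) (hs : s' ⊆ s) : Unrelated R s' t where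
  disjoint := h.disjoint.mono_left hs
  not_rel a ha := h.not_rel a (hs ha)
  not_rel' a ha := h.not_rel' a (hs ha)

/-- `r` is a strict ancestor of every element of `s`, so that `insert r s` is the tree obtained by
grafting the forest `s` onto the root `r`. -/
structure IsRootOver (R : β → β → Prop) (r : β) (s : Finset β) : Prop where
  notMem : r ∉ s
  irrefl : ¬ R r r
  rel : ∀ v ∈ s, R r v
  not_rel : ∀ v ∈ s, ¬ R v r

theorem IsRootOver.mono (h : IsRootOver R r s) (hs : s' ⊆ s) : IsRootOver R r s' where
  notMem hr := h.notMem (hs hr)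
  irrefl := h.irrefl
  rel v hv := h.rel v (hs hv)
  not_rel v hv := h.not_rel v (hs hv)

open Classical in
/-- The subtree of the forest `s` rooted at `v`. -/
noncomputable def subtreeOn (R : β → β → Prop) (s : Finset β) (v : β) : Finset β :=
  {w ∈ s | w = v ∨ R v w}

theorem mem_subtreeOn : w ∈ subtreeOn R s v ↔ w ∈ s ∧ (w = v ∨ R v w) := by
  simp [subtreeOn]

theorem subtreeOn_subset (R : β → β → Prop) (s : Finset β) (v : β) : subtreeOn R s v ⊆ s :=
  fun _ hw => (mem_subtreeOn.1 hw).1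

theorem self_mem_subtreeOn (hv : v ∈ s) : v ∈ subtreeOn R s v :=
  mem_subtreeOn.2 ⟨hv, Or.inl rfl⟩

variable [DecidableEq β]

theorem subtreeOn_union_left (h : Unrelated R s t) (hv : v ∈ s) :
    subtreeOn R (s ∪ t) v = subtreeOn R s v := by
  ext w
  simp only [mem_subtreeOn, Finset.mem_union, and_congr_left_iff, or_iff_left_iff_imp]
  rintro (rfl | hvw) hw
  · exact hv
  · exact absurd hvw (h.not_rel v hv w hw)

theorem subtreeOn_union_right (h : Unrelated R s t) (hv : v ∈ t) :
    subtreeOn R (s ∪ t) v = subtreeOn R t v := by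
  rw [Finset.union_comm, subtreeOn_union_left h.symm hv]

theorem subtreeOn_insert_self (h : IsRootOver R r s) :
    subtreeOn R (insert r s) r = insert r s := by
  ext w
  simp only [mem_subtreeOn, Finset.mem_insert]
  exact ⟨fun hw => hw.1, fun hw => ⟨hw, hw.imp_right (h.rel w)⟩⟩

theorem subtreeOn_insert_of_mem (h : IsRootOver R r s) (hv : v ∈ s) :
    subtreeOn R (insert r s) v = subtreeOn R s v := by
  ext w
  simp only [mem_subtreeOn, Finset.mem_insert, and_congr_left_iff, or_iff_right_iff_imp]
  rintro (rfl | hvw) rfl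
  · exact hv
  · exact absurd hvw (h.not_rel v hv)

theorem IsForestOn.isRootOver_subtreeOn_erase (hs : IsForestOn R s) (hr : r ∈ s)
    (hmin : ∀ v ∈ s, ¬ R v r) : IsRootOver R r ((subtreeOn R s r).erase r) where
  notMem := Finset.notMem_erase _ _
  irrefl := hs.irrefl r hr
  rel v hv := by
    rw [Finset.mem_erase, mem_subtreeOn] at hv
    exact hv.2.2.resolve_left hv.1
  not_rel v hv := hmin v (subtreeOn_subset R s r (Finset.mem_of_mem_erase hv))

theorem IsForestOn.unrelated_subtreeOn_sdiff (hs : IsForestOn R s) (hr : r ∈ s)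
    (hmin : ∀ v ∈ s, ¬ R v r) : Unrelated R (subtreeOn R s r) (s \ subtreeOn R s r) where
  disjoint := Finset.disjoint_sdiff
  not_rel a ha b hb hab := by
    rw [Finset.mem_sdiff] at hb
    obtain ⟨has, rfl | hra⟩ := mem_subtreeOn.1 ha
    · exact hb.2 (mem_subtreeOn.2 ⟨hb.1, Or.inr hab⟩)
    · exact hb.2 (mem_subtreeOn.2 ⟨hb.1, Or.inr (hs.trans r hr a has b hb.1 hra hab)⟩)
  not_rel' a ha b hb hba := by
    rw [Finset.mem_sdiff] at hb
    obtain ⟨has, rfl | hra⟩ := mem_subtreeOn.1 ha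
    · exact hmin b hb.1 hba
    · obtain hbr | hbr | hrb := hs.linear b hb.1 r hr a has hba hra
      · exact hb.2 (mem_subtreeOn.2 ⟨hb.1, Or.inl hbr⟩)
      · exact hmin b hb.1 hbr
      · exact hb.2 (mem_subtreeOn.2 ⟨hb.1, Or.inr hrb⟩)

theorem IsForestOn.induction {motive : Finset β → Prop} (empty : motive ∅)
    (union : ∀ s t, Unrelated R s t → motive s → motive t → motive (s ∪ t))
    (root : ∀ r s, IsRootOver R r s → motive s → motive (insert r s))
    (hs : IsForestOn R s) : motive s := by
  induction s using Finset.strongInduction with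
  | _ s ih =>
  obtain rfl | hne := s.eq_empty_or_nonempty
  · exact empty
  obtain ⟨r, hr, hmin⟩ := hs.exists_forall_not_rel hne
  have hrT : r ∈ subtreeOn R s r := self_mem_subtreeOn hr
  have hTs := subtreeOn_subset R s r
  have herase := (Finset.erase_ssubset hrT).trans_subset hTs
  have hsdiff := Finset.sdiff_ssubset hTs ⟨r, hrT⟩
  have htree : motive (subtreeOn R s r) := by
    rw [← Finset.insert_erase hrT]
    exact root r _ (hs.isRootOver_subtreeOn_erase hr hmin) (ih _ herase (hs.mono herase.1))
  rw [← Finset.union_sdiff_of_subset hTs]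
  exact union _ _ (hs.unrelated_subtreeOn_sdiff hr hmin) htree (ih _ hsdiff (hs.mono hsdiff.1))

end Forests

section ForestFamilies

open Polynomial

variable {β K : Type*} [DecidableEq β] [Field K] {R : β → β → Prop} {r : β} {s t : Finset β}
  {L : K[X] →ₗ[K] K[X]} {Ψ : Finset β → K[X]}

/-- A family of polynomials indexed by finite forests which is multiplicative on disjoint unions
and for which grafting onto a new root is inverted by the operator `L`. Its members with at least
one vertex have no constant term, which makes them unique when `L` is a delta operator. -/
structure IsForestFamily (R : β → β → Prop) (L : K[X] →ₗ[K] K[X]) (Ψ : Finset β → K[X]) :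
    Prop where
  empty : Ψ ∅ = 1
  union : ∀ s t, Unrelated R s t → Ψ (s ∪ t) = Ψ s * Ψ t
  coeff_zero : ∀ s, s.Nonempty → (Ψ s).coeff 0 = 0
  map_insert : ∀ r s, IsRootOver R r s → L (Ψ (insert r s)) = Ψ s

/-- The sum of all ways to cut off from `s` the subtree `T` at one of its vertices, where what is
cut off contributes the linear coefficient of `Ψ T` only. -/
noncomputable def pruning (R : β → β → Prop) (Ψ : Finset β → K[X]) (s : Finset β) : K[X] :=
  ∑ v ∈ s, (Ψ (subtreeOn R s v)).coeff 1 • Ψ (s \ subtreeOn R s v)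

theorem IsForestFamily.pruning_union (hΨ : IsForestFamily R L Ψ) (h : Unrelated R s t) :
    pruning R Ψ (s ∪ t) = pruning R Ψ s * Ψ t + Ψ s * pruning R Ψ t := by
  rw [pruning, Finset.sum_union h.disjoint, pruning, pruning, Finset.sum_mul, Finset.mul_sum]
  congr 1
  · refine Finset.sum_congr rfl fun v hv => ?_
    have hdisj := (h.disjoint.mono_left (subtreeOn_subset R s v)).symm
    rw [subtreeOn_union_left h hv, Finset.union_sdiff_distrib,
      Finset.sdiff_eq_self_of_disjoint hdisj, hΨ.union _ _ (h.mono_left Finset.sdiff_subset),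
      smul_mul_assoc]
  · refine Finset.sum_congr rfl fun v hv => ?_
    have hdisj := h.disjoint.mono_right (subtreeOn_subset R t v)
    rw [subtreeOn_union_right h hv, Finset.union_sdiff_distrib,
      Finset.sdiff_eq_self_of_disjoint hdisj,
      hΨ.union _ _ (h.symm.mono_left Finset.sdiff_subset).symm, mul_smul_comm]

theorem IsForestFamily.pruning_insert (hΨ : IsForestFamily R L Ψ) (h : IsRootOver R r s) :
    pruning R Ψ (insert r s) = C ((Ψ (insert r s)).coeff 1) +
      ∑ v ∈ s, (Ψ (subtreeOn R s v)).coeff 1 • Ψ (insert r (s \ subtreeOn R s v)) := by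
  rw [pruning, Finset.sum_insert h.notMem, subtreeOn_insert_self h, Finset.sdiff_self, hΨ.empty,
    smul_eq_C_mul, mul_one]
  congr 1
  refine Finset.sum_congr rfl fun v hv => ?_
  have hr : r ∉ subtreeOn R s v := fun hr => h.notMem (subtreeOn_subset R s v hr)
  rw [subtreeOn_insert_of_mem h hv, Finset.insert_sdiff_of_notMem _ hr]

theorem IsForestFamily.map_pruning_insert (hΨ : IsForestFamily R L Ψ) (hL : IsDeltaOperator L)
    (h : IsRootOver R r s) : L (pruning R Ψ (insert r s)) = pruning R Ψ s := by
  rw [hΨ.pruning_insert h, map_add, hL.map_C, zero_add, map_sum, pruning]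
  refine Finset.sum_congr rfl fun v _ => ?_
  rw [map_smul, hΨ.map_insert r _ (h.mono Finset.sdiff_subset)]

theorem IsForestFamily.pruning_insert_coeff_zero (hΨ : IsForestFamily R L Ψ)
    (h : IsRootOver R r s) :
    (pruning R Ψ (insert r s)).coeff 0 = (Ψ (insert r s)).coeff 1 := by
  rw [hΨ.pruning_insert h, coeff_add, coeff_C_zero, finsetSum_coeff, Finset.sum_eq_zero, add_zero]
  intro v _
  rw [coeff_smul, hΨ.coeff_zero _ (Finset.insert_nonempty _ _), smul_zero]

theorem IsForestFamily.derivative_eq_pruning (hΨ : IsForestFamily R L Ψ)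
    (hL : IsDeltaOperator L) (hs : IsForestOn R s) : derivative (Ψ s) = pruning R Ψ s := by
  refine hs.induction (motive := fun s => derivative (Ψ s) = pruning R Ψ s) ?_
    (fun s t h ihs iht => ?_) fun r s h ih => hL.eq_of_map_eq_of_coeff_zero_eq ?_ ?_
  · rw [hΨ.empty, derivative_one, pruning, Finset.sum_empty]
  · rw [hΨ.union s t h, derivative_mul, ihs, iht, hΨ.pruning_union h]
  · rw [hΨ.map_pruning_insert hL h, ← hL.derivative_comm, hΨ.map_insert r s h, ih]
  · rw [hΨ.pruning_insert_coeff_zero h, coeff_derivative, zero_add, Nat.cast_zero, zero_add,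
      mul_one]

end ForestFamilies


section ForestFactorial

open Polynomial

variable {β γ K : Type*} [DecidableEq β] [Field K] {R : β → β → Prop} {r : β} {s t : Finset β}

/-- The forest factorial of the forest `s`: the product over its vertices of the sizes of the
subtrees they span. -/
noncomputable def factorialOn (R : β → β → Prop) (s : Finset β) : ℕ :=
  ∏ v ∈ s, (subtreeOn R s v).card

omit [DecidableEq β] in
theorem factorialOn_map (g : β ↪ γ) {R' : γ → γ → Prop} (hg : ∀ a b, R' (g a) (g b) ↔ R a b)
    (s : Finset β) : factorialOn R' (s.map g) = factorialOn R s := by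
  rw [factorialOn, Finset.prod_map, factorialOn]
  refine Finset.prod_congr rfl fun v _ => ?_
  have hmap : subtreeOn R' (s.map g) (g v) = (subtreeOn R s v).map g := by
    ext w
    simp only [mem_subtreeOn, Finset.mem_map]
    constructor
    · rintro ⟨⟨u, hu, rfl⟩, hvu⟩
      exact ⟨u, ⟨hu, hvu.imp (fun h => g.injective h) (hg v u).1⟩, rfl⟩
    · rintro ⟨u, ⟨hu, hvu⟩, rfl⟩
      exact ⟨⟨u, hu, rfl⟩, hvu.imp (congrArg g) (hg v u).2⟩
  rw [hmap, Finset.card_map]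

theorem factorialOn_union (h : Unrelated R s t) :
    factorialOn R (s ∪ t) = factorialOn R s * factorialOn R t := by
  rw [factorialOn, Finset.prod_union h.disjoint]
  congr 1
  · exact Finset.prod_congr rfl fun v hv => by rw [subtreeOn_union_left h hv]
  · exact Finset.prod_congr rfl fun v hv => by rw [subtreeOn_union_right h hv]

theorem factorialOn_insert (h : IsRootOver R r s) :
    factorialOn R (insert r s) = (s.card + 1) * factorialOn R s := by
  rw [factorialOn, Finset.prod_insert h.notMem, subtreeOn_insert_self h,
    Finset.card_insert_of_notMem h.notMem]
  congr 1
  exact Finset.prod_congr rfl fun v hv => by rw [subtreeOn_insert_of_mem h hv]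

omit [DecidableEq β] in
theorem factorialOn_singleton (hr : ¬ R r r) : factorialOn R {r} = 1 := by
  classical
  have hroot : IsRootOver R r ∅ := ⟨by simp, hr, by simp, by simp⟩
  rw [← insert_empty_eq, factorialOn_insert hroot]
  simp [factorialOn]

variable (K) in
/-- The polynomial `X ^ |s| / s!` of a forest `s`, whose value at `m` is the volume of the polytope
of weakly order-preserving maps from `s` to `[0, m]`. -/
noncomputable def volumePoly (R : β → β → Prop) (s : Finset β) : K[X] :=
  C (factorialOn R s : K)⁻¹ * X ^ s.card

theorem isForestFamily_volumePoly [CharZero K] (R : β → β → Prop) :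
    IsForestFamily R derivative (volumePoly K R) where
  empty := by simp [volumePoly, factorialOn]
  union s t h := by
    simp only [volumePoly, factorialOn_union h, Finset.card_union_of_disjoint h.disjoint, pow_add,
      Nat.cast_mul, mul_inv, C_mul]
    ring
  coeff_zero s hs := by simp [volumePoly, coeff_X_pow, hs.card_pos.ne]
  map_insert r s h := by
    have h0 : (s.card : K) + 1 ≠ 0 := by exact_mod_cast s.card.succ_ne_zero
    simp only [volumePoly, factorialOn_insert h, Finset.card_insert_of_notMem h.notMem,
      derivative_C_mul_X_pow, Nat.cast_mul, Nat.cast_add, Nat.cast_one, Nat.add_sub_cancel]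
    congr 2
    field_simp

omit [DecidableEq β] in
theorem volumePoly_coeff_one (R : β → β → Prop) (s : Finset β) :
    (volumePoly K R s).coeff 1 = if s.card = 1 then (factorialOn R s : K)⁻¹ else 0 := by
  simp [volumePoly, coeff_X_pow, eq_comm]

omit [DecidableEq β] in
theorem volumePoly_eval_neg_one (R : β → β → Prop) (s : Finset β) :
    (volumePoly K R s).eval (-1) = (-1) ^ s.card * (factorialOn R s : K)⁻¹ := by
  rw [volumePoly, eval_mul, eval_C, eval_pow, eval_X, mul_comm]

end ForestFactorial

section OrderPolynomials

open Polynomial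

variable {β K : Type*} {R : β → β → Prop} {r : β} {s t : Finset β}

/-- The strictly order-preserving maps from the poset `s` to `Fin m`. -/
def strictMaps (R : β → β → Prop) (s : Finset β) (m : ℕ) : Set (s → Fin m) :=
  {f | ∀ v w : s, R v w → f v < f w}

/-- The number `ω_k(s)` of surjective strictly order-preserving maps from the poset `s` to a chain
with `k` elements. -/
noncomputable def surjCount (R : β → β → Prop) (s : Finset β) (k : ℕ) : ℕ :=
  {f ∈ strictMaps R s k | Function.Surjective f}.ncard

theorem surjCount_eq_zero {k : ℕ} (hk : s.card < k) : surjCount R s k = 0 := by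
  refine (Set.ncard_eq_zero).2 (Set.eq_empty_of_forall_notMem fun f hf => hk.not_ge ?_)
  simpa using Fintype.card_le_of_surjective f hf.2

theorem strictMaps_eq_iUnion (R : β → β → Prop) (s : Finset β) (m : ℕ) :
    strictMaps R s m = ⋃ I : Finset (Fin m),
      (I.orderEmbOfFin rfl ∘ ·) '' {f ∈ strictMaps R s I.card | Function.Surjective f} := by
  classical
  ext f
  simp only [Set.mem_iUnion, Set.mem_image]
  constructor
  · intro hf
    let e := (Finset.univ.image f).orderIsoOfFin rfl
    have hmem : ∀ v, f v ∈ Finset.univ.image f := fun v =>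
      Finset.mem_image_of_mem f (Finset.mem_univ v)
    refine ⟨Finset.univ.image f, fun v => e.symm ⟨f v, hmem v⟩,
      ⟨fun v w h => e.symm.lt_iff_lt.2 (hf v w h), fun i => ?_⟩, funext fun v => ?_⟩
    · obtain ⟨v, -, hv⟩ := Finset.mem_image.1 (e i).2
      exact ⟨v, e.symm_apply_eq.2 (Subtype.ext hv)⟩
    · exact congrArg Subtype.val (e.apply_symm_apply ⟨f v, hmem v⟩)
  · rintro ⟨I, g, ⟨hg, -⟩, rfl⟩ v w h
    exact (I.orderEmbOfFin rfl).lt_iff_lt.2 (hg v w h)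

theorem ncard_strictMaps_eq_sum (R : β → β → Prop) (s : Finset β) (m : ℕ) :
    (strictMaps R s m).ncard = ∑ k ∈ Finset.range (m + 1), m.choose k * surjCount R s k := by
  have hrange : ∀ (I : Finset (Fin m)) {f : s → Fin I.card}, Function.Surjective f →
      Set.range (I.orderEmbOfFin rfl ∘ f) = I := fun I f hf => by
    rw [hf.range_comp, Finset.range_orderEmbOfFin]
  rw [strictMaps_eq_iUnion, Set.ncard_iUnion_of_finite (fun _ => Set.toFinite _),
    finsum_eq_sum_of_fintype, ← Finset.powerset_univ]
  · have himage : ∀ I : Finset (Fin m), ((I.orderEmbOfFin rfl ∘ ·) ''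
        {f ∈ strictMaps R s I.card | Function.Surjective f}).ncard = surjCount R s I.card :=
      fun I => Set.ncard_image_of_injective _ (I.orderEmbOfFin rfl).injective.comp_left
    simp only [himage]
    rw [Finset.sum_powerset_apply_card (surjCount R s), Finset.card_fin]
    simp only [smul_eq_mul]
  · rintro I J hIJ
    refine Set.disjoint_left.2 ?_
    rintro _ ⟨f, ⟨-, hf⟩, rfl⟩ ⟨g, ⟨-, hg⟩, hgf⟩
    exact hIJ <| Finset.coe_injective <|
      (hrange I hf).symm.trans <| (congrArg Set.range hgf).symm.trans <| hrange J hg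

theorem exists_eq_succ_comp_of_mem_strictMaps {m : ℕ} {f : s → Fin (m + 1)}
    (hf : f ∈ strictMaps R s (m + 1)) (hf0 : ∀ v, f v ≠ 0) :
    ∃ g ∈ strictMaps R s m, Fin.succ ∘ g = f :=
  ⟨fun v => (f v).pred (hf0 v), fun v w h => Fin.pred_lt_pred_iff.2 (hf v w h),
    funext fun v => Fin.succ_pred (f v) (hf0 v)⟩

theorem succ_comp_mem_strictMaps {m : ℕ} {f : s → Fin m} (hf : f ∈ strictMaps R s m) :
    Fin.succ ∘ f ∈ strictMaps R s (m + 1) :=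
  fun v w h => Fin.succ_lt_succ_iff.2 (hf v w h)

variable [DecidableEq β]

theorem ncard_strictMaps_union (h : Unrelated R s t) (m : ℕ) :
    (strictMaps R (s ∪ t) m).ncard = (strictMaps R s m).ncard * (strictMaps R t m).ncard := by
  let e := Equiv.piFinsetUnion (fun _ => Fin m) h.disjoint
  have he : e ⁻¹' strictMaps R (s ∪ t) m = strictMaps R s m ×ˢ strictMaps R t m := by
    ext ⟨f, g⟩
    have hl : ∀ v (hv : v ∈ s), e (f, g) ⟨v, Finset.mem_union_left t hv⟩ = f ⟨v, hv⟩ :=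
      fun v hv => Equiv.piFinsetUnion_left _ h.disjoint hv _
    have hr : ∀ v (hv : v ∈ t), e (f, g) ⟨v, Finset.mem_union_right s hv⟩ = g ⟨v, hv⟩ :=
      fun v hv => Equiv.piFinsetUnion_right _ h.disjoint hv _
    constructor
    · refine fun hfg => ⟨fun ⟨v, hv⟩ ⟨w, hw⟩ hvw => ?_, fun ⟨v, hv⟩ ⟨w, hw⟩ hvw => ?_⟩
      · change f ⟨v, hv⟩ < f ⟨w, hw⟩
        rw [← hl v hv, ← hl w hw]
        exact hfg _ _ hvw
      · change g ⟨v, hv⟩ < g ⟨w, hw⟩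
        rw [← hr v hv, ← hr w hw]
        exact hfg _ _ hvw
    · rintro ⟨hf, hg⟩ ⟨v, hv⟩ ⟨w, hw⟩ hvw
      obtain hvs | hvt := Finset.mem_union.1 hv <;> obtain hws | hwt := Finset.mem_union.1 hw
      · rw [hl v hvs, hl w hws]
        exact hf ⟨v, hvs⟩ ⟨w, hws⟩ hvw
      · exact absurd hvw (h.not_rel v hvs w hwt)
      · exact absurd hvw (h.not_rel' w hws v hvt)
      · rw [hr v hvt, hr w hwt]
        exact hg ⟨v, hvt⟩ ⟨w, hwt⟩ hvw
  rw [← Set.ncard_prod, ← he, Set.ncard_preimage_of_injective_subset_range e.injective]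
  simp

/-- The extension of a map on `s` to the new minimal vertex `r`: it takes the value `0` at `r`, and
its other values are shifted by one. -/
def insertZero {m : ℕ} (r : β) (f : s → Fin m) (v : (insert r s : Finset β)) : Fin (m + 1) :=
  if hv : (v : β) ∈ s then (f ⟨v, hv⟩).succ else 0

theorem insertZero_apply_of_mem {m : ℕ} (f : s → Fin m) {v : (insert r s : Finset β)}
    (hv : (v : β) ∈ s) : insertZero r f v = (f ⟨v, hv⟩).succ :=
  dif_pos hv

theorem insertZero_apply_of_notMem {m : ℕ} (f : s → Fin m) {v : (insert r s : Finset β)}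
    (hv : (v : β) ∉ s) : insertZero r f v = 0 :=
  dif_neg hv

theorem insertZero_mem_strictMaps (h : IsRootOver R r s) {m : ℕ} {f : s → Fin m}
    (hf : f ∈ strictMaps R s m) : insertZero r f ∈ strictMaps R (insert r s) (m + 1) := by
  rintro ⟨v, hv⟩ ⟨w, hw⟩ hvw
  obtain rfl | hws := Finset.mem_insert.1 hw
  · obtain rfl | hvs := Finset.mem_insert.1 hv
    · exact absurd hvw h.irrefl
    · exact absurd hvw (h.not_rel v hvs)
  rw [insertZero_apply_of_mem f (v := ⟨w, hw⟩) hws]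
  by_cases hvs : v ∈ s
  · rw [insertZero_apply_of_mem f (v := ⟨v, hv⟩) hvs, Fin.succ_lt_succ_iff]
    exact hf _ _ hvw
  · rw [insertZero_apply_of_notMem f (v := ⟨v, hv⟩) hvs]
    exact Fin.succ_pos _

theorem strictMaps_insert_succ (h : IsRootOver R r s) (m : ℕ) :
    strictMaps R (insert r s) (m + 1) =
      (Fin.succ ∘ ·) '' strictMaps R (insert r s) m ∪ insertZero r '' strictMaps R s m := by
  refine Set.Subset.antisymm (fun f hf => ?_) (Set.union_subset ?_ ?_)
  · have hpos : ∀ v (hv : v ∈ s), f ⟨v, Finset.mem_insert_of_mem hv⟩ ≠ 0 := fun v hv =>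
      Fin.ne_zero_of_lt (hf ⟨r, Finset.mem_insert_self r s⟩ ⟨v, _⟩ (h.rel v hv))
    by_cases h0 : f ⟨r, Finset.mem_insert_self r s⟩ = 0
    · obtain ⟨g, hg, hgf⟩ := exists_eq_succ_comp_of_mem_strictMaps (R := R)
        (f := fun v : s => f ⟨v, Finset.mem_insert_of_mem v.2⟩)
        (fun _ _ hvw => hf ⟨_, _⟩ ⟨_, _⟩ hvw) fun v => hpos v v.2
      refine Or.inr ⟨g, hg, funext fun ⟨v, hv⟩ => ?_⟩
      obtain rfl | hvs := Finset.mem_insert.1 hv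
      · rw [insertZero_apply_of_notMem g h.notMem, h0]
      · rw [insertZero_apply_of_mem g hvs]
        exact congrFun hgf ⟨v, hvs⟩
    · refine Or.inl (exists_eq_succ_comp_of_mem_strictMaps hf fun ⟨v, hv⟩ => ?_)
      obtain rfl | hvs := Finset.mem_insert.1 hv
      · exact h0
      · exact hpos v hvs
  · exact Set.image_subset_iff.2 fun f hf => succ_comp_mem_strictMaps hf
  · exact Set.image_subset_iff.2 fun f hf => insertZero_mem_strictMaps h hf

theorem ncard_strictMaps_insert (h : IsRootOver R r s) (m : ℕ) :
    (strictMaps R (insert r s) (m + 1)).ncard =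
      (strictMaps R (insert r s) m).ncard + (strictMaps R s m).ncard := by
  have hinj : Function.Injective (insertZero r : (s → Fin m) → _) := fun f g hfg =>
    funext fun v => Fin.succ_injective m <| by
      have hv := congrFun hfg ⟨v, Finset.mem_insert_of_mem v.2⟩
      rwa [insertZero_apply_of_mem f v.2, insertZero_apply_of_mem g v.2] at hv
  have hdisj : Disjoint ((Fin.succ ∘ ·) '' strictMaps R (insert r s) m)
      (insertZero r '' strictMaps R s m) := by
    refine Set.disjoint_left.2 ?_
    rintro _ ⟨f, -, rfl⟩ ⟨g, -, hgf⟩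
    have hr := congrFun hgf ⟨r, Finset.mem_insert_self r s⟩
    rw [insertZero_apply_of_notMem g h.notMem] at hr
    exact (Fin.succ_ne_zero _ hr.symm).elim
  rw [strictMaps_insert_succ h, Set.ncard_union_eq hdisj (Set.toFinite _) (Set.toFinite _),
    Set.ncard_image_of_injective _ (Fin.succ_injective m).comp_left,
    Set.ncard_image_of_injective _ hinj]

end OrderPolynomials

section StrictOrderPolynomial

open Polynomial

variable {β K : Type*} [Field K] {R : β → β → Prop} {s : Finset β}

variable (K) in
/-- The strict order polynomial of the poset `s`, whose value at `m` is the number of strictly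
order-preserving maps from `s` to a chain with `m` elements. -/
noncomputable def strictOrderPoly (R : β → β → Prop) (s : Finset β) : K[X] :=
  ∑ k ∈ Finset.range (s.card + 1),
    C ((surjCount R s k : K) / (k.factorial : K)) * descPochhammer K k

variable (K) in
/-- The Murua coefficient `ω(s)` of the forest `s`. -/
noncomputable def muruaCoeff (R : β → β → Prop) (s : Finset β) : K :=
  ∑ k ∈ Finset.Icc 1 s.card, ((-1) ^ (k + 1) / (k : K)) * (surjCount R s k : K)

variable [CharZero K]

theorem strictOrderPoly_coeff_one (R : β → β → Prop) (s : Finset β) :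
    (strictOrderPoly K R s).coeff 1 = muruaCoeff K R s := by
  rw [strictOrderPoly, finsetSum_coeff, Finset.sum_range_succ', muruaCoeff,
    ← Finset.Ico_add_one_right_eq_Icc, Finset.sum_Ico_eq_sum_range, Nat.add_sub_cancel]
  simp only [descPochhammer_zero, mul_one, coeff_C_succ, add_zero, coeff_C_mul,
    descPochhammer_succ_coeff_one]
  refine Finset.sum_congr rfl fun k _ => ?_
  have hfact : (k.factorial : K) ≠ 0 := by exact_mod_cast k.factorial_ne_zero
  have hsucc : (k : K) + 1 ≠ 0 := by exact_mod_cast k.succ_ne_zero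
  rw [Nat.factorial_succ, add_comm 1 k]
  push_cast
  field_simp
  ring

theorem strictOrderPoly_eval_natCast (R : β → β → Prop) (s : Finset β) (m : ℕ) :
    (strictOrderPoly K R s).eval (m : K) = ((strictMaps R s m).ncard : K) := by
  let a : ℕ → K := fun k => ((m.choose k * surjCount R s k : ℕ) : K)
  have hterm : ∀ k, ((surjCount R s k : K) / (k.factorial : K)) *
      (descPochhammer K k).eval (m : K) = a k := fun k => by
    have hfact : (k.factorial : K) ≠ 0 := by exact_mod_cast k.factorial_ne_zero
    simp only [a]
    rw [descPochhammer_eval_eq_descFactorial, Nat.descFactorial_eq_factorial_mul_choose]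
    push_cast
    field_simp
  rw [strictOrderPoly, eval_finsetSum, ncard_strictMaps_eq_sum, Nat.cast_sum]
  simp only [eval_mul, eval_C, hterm]
  calc ∑ k ∈ Finset.range (s.card + 1), a k
      = ∑ k ∈ Finset.range (m + s.card + 1), a k :=
        Finset.sum_subset (Finset.range_subset_range.2 (by omega)) fun k _ hk => by
          simp only [a, surjCount_eq_zero (show s.card < k by simpa using hk), mul_zero,
            Nat.cast_zero]
    _ = ∑ k ∈ Finset.range (m + 1), a k :=
        (Finset.sum_subset (Finset.range_subset_range.2 (by omega)) fun k _ hk => by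
          simp only [a, Nat.choose_eq_zero_of_lt (show m < k by simpa using hk), zero_mul,
            Nat.cast_zero]).symm

theorem isForestFamily_strictOrderPoly [DecidableEq β] (R : β → β → Prop) :
    IsForestFamily R (forwardDiff K) (strictOrderPoly K R) where
  empty := by
    refine polynomial_eq_of_eval_natCast_eq fun m => ?_
    rw [strictOrderPoly_eval_natCast, eval_one, Nat.cast_eq_one, Set.ncard_eq_one]
    exact ⟨isEmptyElim, Set.eq_singleton_iff_unique_mem.2
      ⟨fun v => isEmptyElim v, fun f _ => Subsingleton.elim _ _⟩⟩
  union s t h := by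
    refine polynomial_eq_of_eval_natCast_eq fun m => ?_
    simp only [eval_mul, strictOrderPoly_eval_natCast, ncard_strictMaps_union h, Nat.cast_mul]
  coeff_zero s hs := by
    have : Nonempty s := hs.to_subtype
    have h0 := strictOrderPoly_eval_natCast (K := K) R s 0
    rwa [Nat.cast_zero, Set.eq_empty_of_isEmpty (strictMaps R s 0), Set.ncard_empty,
      Nat.cast_zero, ← coeff_zero_eq_eval_zero] at h0
  map_insert r s h := by
    refine polynomial_eq_of_eval_natCast_eq fun m => ?_
    rw [forwardDiff_apply, eval_sub, taylor_eval, ← Nat.cast_add_one]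
    rw [strictOrderPoly_eval_natCast, strictOrderPoly_eval_natCast, strictOrderPoly_eval_natCast,
      ncard_strictMaps_insert h, Nat.cast_add, add_sub_cancel_left]

theorem strictOrderPoly_eval_neg_one (hs : IsForestOn R s) :
    (strictOrderPoly K R s).eval (-1) = (-1) ^ s.card := by
  classical
  have hΩ := isForestFamily_strictOrderPoly (K := K) R
  refine hs.induction (motive := fun s => (strictOrderPoly K R s).eval (-1) = (-1) ^ s.card) ?_
    (fun s t h ihs iht => ?_) fun r s h ih => ?_
  · rw [hΩ.empty, eval_one, Finset.card_empty, pow_zero]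
  · rw [hΩ.union s t h, eval_mul, ihs, iht, Finset.card_union_of_disjoint h.disjoint, pow_add]
  · have hdiff := congrArg (eval (-1)) (hΩ.map_insert r s h)
    rw [forwardDiff_apply, eval_sub, taylor_eval, neg_add_cancel, ← coeff_zero_eq_eval_zero,
      hΩ.coeff_zero _ (Finset.insert_nonempty r s), ih, zero_sub, neg_eq_iff_eq_neg] at hdiff
    rw [hdiff, Finset.card_insert_of_notMem h.notMem, pow_succ, mul_neg_one]

end StrictOrderPolynomial


section NoncrossingPartitions

variable {n : ℕ} {S J : Finset (Fin n)} {P Q : Finset (Finset (Fin n))} {U V W : Finset (Fin n)}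

theorem NestedIn.refl (V : Finset (Fin n)) : NestedIn V V :=
  fun w hw => ⟨⟨w, hw, le_rfl⟩, ⟨w, hw, le_rfl⟩⟩

theorem NestedIn.trans (hUV : NestedIn U V) (hVW : NestedIn V W) : NestedIn U W := by
  intro u hu
  obtain ⟨⟨a, ha, hau⟩, b, hb, hub⟩ := hUV u hu
  obtain ⟨⟨c, hc, hca⟩, -⟩ := hVW a ha
  obtain ⟨-, d, hd, hbd⟩ := hVW b hb
  exact ⟨⟨c, hc, hca.trans hau⟩, ⟨d, hd, hub.trans hbd⟩⟩

/-- The strict nesting order on blocks: `V` is a strict ancestor of `W` in the forest of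
nestings. -/
def StrictlyNests (V W : Finset (Fin n)) : Prop :=
  NestedIn W V ∧ V ≠ W

theorem mem_subtreeOn_strictlyNests :
    W ∈ subtreeOn StrictlyNests P V ↔ W ∈ P ∧ NestedIn W V := by
  rw [mem_subtreeOn, and_congr_right_iff]
  refine fun _ => ⟨?_, fun h => ?_⟩
  · rintro (rfl | h)
    · exact NestedIn.refl _
    · exact h.1
  · obtain rfl | hVW := eq_or_ne W V
    · exact Or.inl rfl
    · exact Or.inr ⟨h, hVW.symm⟩

/-- `P` is the set of blocks of a noncrossing partition of `S`. -/
structure IsNoncrossingOn (S : Finset (Fin n)) (P : Finset (Finset (Fin n))) : Prop where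
  nonempty : ∀ V ∈ P, V.Nonempty
  subset : ∀ V ∈ P, V ⊆ S
  cover : ∀ x ∈ S, ∃ V ∈ P, x ∈ V
  disjoint : ∀ V ∈ P, ∀ W ∈ P, ∀ x, x ∈ V → x ∈ W → V = W
  noncrossing : ∀ a b c d : Fin n, a < b → b < c → c < d →
    ∀ V ∈ P, ∀ W ∈ P, a ∈ V → c ∈ V → b ∈ W → d ∈ W → V = W

/-- Some block of `P` is the root of the forest of nestings of `P`, which is hence a tree. -/
def HasOuterBlock (P : Finset (Finset (Fin n))) : Prop :=
  ∃ V ∈ P, ∀ W ∈ P, NestedIn W V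

open Classical in
/-- The noncrossing partitions of `S`, each given by its set of blocks. -/
noncomputable def noncrossingOn (S : Finset (Fin n)) : Finset (Finset (Finset (Fin n))) :=
  {P | IsNoncrossingOn S P}

open Classical in
/-- The irreducible noncrossing partitions of `S`, each given by its set of blocks. -/
noncomputable def irreducibleOn (S : Finset (Fin n)) : Finset (Finset (Finset (Fin n))) :=
  {P ∈ noncrossingOn S | HasOuterBlock P}

open Classical in
/-- The nonempty intervals of the ordered set `S`. -/
noncomputable def intervalsOf (S : Finset (Fin n)) : Finset (Finset (Fin n)) :=
  {J ∈ S.powerset | J.Nonempty ∧ ∀ x ∈ J, ∀ y ∈ J, ∀ z ∈ S, x ≤ z → z ≤ y → z ∈ J}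

theorem mem_noncrossingOn : P ∈ noncrossingOn S ↔ IsNoncrossingOn S P := by
  simp [noncrossingOn]

theorem mem_irreducibleOn : P ∈ irreducibleOn S ↔ IsNoncrossingOn S P ∧ HasOuterBlock P := by
  simp [irreducibleOn, mem_noncrossingOn]

theorem mem_intervalsOf : J ∈ intervalsOf S ↔
    J ⊆ S ∧ J.Nonempty ∧ ∀ x ∈ J, ∀ y ∈ J, ∀ z ∈ S, x ≤ z → z ≤ y → z ∈ J := by
  simp [intervalsOf]

theorem self_mem_intervalsOf (hS : S.Nonempty) : S ∈ intervalsOf S :=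
  mem_intervalsOf.2 ⟨subset_rfl, hS, fun _ _ _ _ _ hz _ _ => hz⟩

namespace IsNoncrossingOn

theorem parts_nonempty (hP : IsNoncrossingOn S P) (hS : S.Nonempty) : P.Nonempty :=
  let ⟨_, hx⟩ := hS
  let ⟨V, hV, _⟩ := hP.cover _ hx
  ⟨V, hV⟩

theorem eq_of_nestedIn (hP : IsNoncrossingOn S P) (hV : V ∈ P) (hW : W ∈ P)
    (hVW : NestedIn V W) (hWV : NestedIn W V) : V = W := by
  have hne := hP.nonempty V hV
  obtain ⟨⟨y, hy, hyx⟩, -⟩ := hVW _ (V.min'_mem hne)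
  obtain ⟨⟨z, hz, hzy⟩, -⟩ := hWV y hy
  have hyV : y = V.min' hne := le_antisymm hyx ((V.min'_le z hz).trans hzy)
  exact hP.disjoint V hV W hW y (hyV ▸ V.min'_mem hne) hy

theorem nestedIn_of_mem_Icc (hP : IsNoncrossingOn S P) (hV : V ∈ P) (hW : W ∈ P) {a w b : Fin n}
    (ha : a ∈ V) (hb : b ∈ V) (hw : w ∈ W) (hawb : w ∈ Set.Icc a b) : NestedIn W V := by
  obtain rfl | hVW := eq_or_ne V W
  · exact NestedIn.refl V
  have hne : ∀ x ∈ V, x ≠ w := by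
    rintro x hx rfl
    exact hVW (hP.disjoint V hV W hW x hx hw)
  have haw := lt_of_le_of_ne hawb.1 (hne a ha)
  have hwb := lt_of_le_of_ne hawb.2 (hne b hb).symm
  intro u hu
  constructor
  · by_contra! hcon
    exact hVW (hP.noncrossing u a w b (hcon a ha) haw hwb W hW V hV hu hw ha hb).symm
  · by_contra! hcon
    exact hVW (hP.noncrossing a w b u haw hwb (hcon b hb) V hV W hW ha hb hw hu)

theorem isForestOn (hP : IsNoncrossingOn S P) : IsForestOn StrictlyNests P where
  irrefl V _ h := h.2 rfl
  trans U hU V hV W hW hUV hVW := by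
    refine ⟨hVW.1.trans hUV.1, ?_⟩
    rintro rfl
    exact hUV.2 (hP.eq_of_nestedIn hU hV hVW.1 hUV.1)
  linear V hV W hW U hU hVU hWU := by
    obtain ⟨x, hx⟩ := hP.nonempty U hU
    obtain ⟨⟨a, ha, hax⟩, b, hb, hxb⟩ := hVU.1 x hx
    obtain ⟨⟨c, hc, hcx⟩, d, hd, hxd⟩ := hWU.1 x hx
    obtain rfl | hVW := eq_or_ne V W
    · exact Or.inl rfl
    obtain hac | hca := le_total a c
    · exact Or.inr <| Or.inl
        ⟨hP.nestedIn_of_mem_Icc hV hW ha hb hc ⟨hac, hcx.trans hxb⟩, hVW⟩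
    · exact Or.inr <| Or.inr
        ⟨hP.nestedIn_of_mem_Icc hW hV hc hd ha ⟨hca, hax.trans hxd⟩, hVW.symm⟩

theorem sup_eq (hP : IsNoncrossingOn S P) : P.sup id = S := by
  ext x
  simp only [Finset.mem_sup, id]
  exact ⟨fun ⟨V, hV, hx⟩ => hP.subset V hV hx, hP.cover x⟩

theorem of_subset (hP : IsNoncrossingOn S P) (hQ : Q ⊆ P) : IsNoncrossingOn (Q.sup id) Q where
  nonempty V hV := hP.nonempty V (hQ hV)
  subset V hV := Finset.le_sup (f := id) hV
  cover x hx := by simpa only [Finset.mem_sup, id] using hx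
  disjoint V hV W hW := hP.disjoint V (hQ hV) W (hQ hW)
  noncrossing a b c d hab hbc hcd V hV W hW :=
    hP.noncrossing a b c d hab hbc hcd V (hQ hV) W (hQ hW)

theorem sup_sdiff (hP : IsNoncrossingOn S P) (hQ : Q ⊆ P) : (P \ Q).sup id = S \ Q.sup id := by
  ext x
  simp only [Finset.mem_sup, Finset.mem_sdiff, id, not_exists, not_and]
  constructor
  · rintro ⟨V, ⟨hV, hVQ⟩, hx⟩
    refine ⟨hP.subset V hV hx, fun W hW hxW => hVQ ?_⟩
    rwa [hP.disjoint V hV W (hQ hW) x hx hxW]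
  · rintro ⟨hx, hxQ⟩
    obtain ⟨V, hV, hxV⟩ := hP.cover x hx
    exact ⟨V, ⟨hV, fun hVQ => hxQ V hVQ hxV⟩, hxV⟩

theorem mem_sup_subtreeOn (hP : IsNoncrossingOn S P) (hV : V ∈ P) {x : Fin n} :
    x ∈ (subtreeOn StrictlyNests P V).sup id ↔ x ∈ S ∧ (∃ a ∈ V, a ≤ x) ∧ ∃ b ∈ V, x ≤ b := by
  simp only [Finset.mem_sup, id, mem_subtreeOn_strictlyNests]
  constructor
  · rintro ⟨W, ⟨hW, hWV⟩, hx⟩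
    exact ⟨hP.subset W hW hx, hWV x hx⟩
  · rintro ⟨hx, ⟨a, ha, hax⟩, b, hb, hxb⟩
    obtain ⟨W, hW, hxW⟩ := hP.cover x hx
    exact ⟨W, ⟨hW, hP.nestedIn_of_mem_Icc hV hW ha hb hxW ⟨hax, hxb⟩⟩, hxW⟩

theorem sup_subtreeOn_mem_intervalsOf (hP : IsNoncrossingOn S P) (hV : V ∈ P) :
    (subtreeOn StrictlyNests P V).sup id ∈ intervalsOf S := by
  rw [mem_intervalsOf]
  refine ⟨fun x hx => ((hP.mem_sup_subtreeOn hV).1 hx).1, ?_, fun x hx y hy z hz hxz hzy => ?_⟩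
  · obtain ⟨x, hx⟩ := hP.nonempty V hV
    exact ⟨x, (hP.mem_sup_subtreeOn hV).2 ⟨hP.subset V hV hx, NestedIn.refl V x hx⟩⟩
  · obtain ⟨-, ⟨a, ha, hax⟩, -⟩ := (hP.mem_sup_subtreeOn hV).1 hx
    obtain ⟨-, -, b, hb, hyb⟩ := (hP.mem_sup_subtreeOn hV).1 hy
    exact (hP.mem_sup_subtreeOn hV).2 ⟨hz, ⟨a, ha, hax.trans hxz⟩, ⟨b, hb, hzy.trans hyb⟩⟩

theorem subtreeOn_mem_irreducibleOn (hP : IsNoncrossingOn S P) (hV : V ∈ P) :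
    subtreeOn StrictlyNests P V ∈ irreducibleOn ((subtreeOn StrictlyNests P V).sup id) :=
  mem_irreducibleOn.2 ⟨hP.of_subset (subtreeOn_subset _ P V), V, self_mem_subtreeOn hV,
    fun _ hW => (mem_subtreeOn_strictlyNests.1 hW).2⟩

theorem sdiff_mem_noncrossingOn (hP : IsNoncrossingOn S P) (hQ : Q ⊆ P) :
    P \ Q ∈ noncrossingOn (S \ Q.sup id) := by
  rw [mem_noncrossingOn, ← hP.sup_sdiff hQ]
  exact hP.of_subset Finset.sdiff_subset

theorem subtreeOn_injOn (hP : IsNoncrossingOn S P) :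
    Set.InjOn (subtreeOn StrictlyNests P) (P : Set (Finset (Fin n))) := by
  intro V hV W hW hVW
  have hVW' : V ∈ subtreeOn StrictlyNests P W := hVW ▸ self_mem_subtreeOn hV
  have hWV' : W ∈ subtreeOn StrictlyNests P V := hVW.symm ▸ self_mem_subtreeOn hW
  exact hP.eq_of_nestedIn hV hW (mem_subtreeOn_strictlyNests.1 hVW').2
    (mem_subtreeOn_strictlyNests.1 hWV').2

theorem disjoint_blocks (hP : IsNoncrossingOn (S \ J) P) (hQ : IsNoncrossingOn J Q)
    (hV : V ∈ P) (hW : W ∈ Q) : Disjoint V W :=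
  Finset.disjoint_of_subset_left (hP.subset V hV)
    (Finset.disjoint_of_subset_right (hQ.subset W hW) Finset.sdiff_disjoint)

theorem disjoint_parts (hP : IsNoncrossingOn (S \ J) P) (hQ : IsNoncrossingOn J Q) :
    Disjoint P Q :=
  Finset.disjoint_left.2 fun V hV hVQ =>
    (hP.nonempty V hV).ne_empty (disjoint_self.1 (hP.disjoint_blocks hQ hV hVQ))

theorem union (hJ : J ∈ intervalsOf S) (hP : IsNoncrossingOn (S \ J) P)
    (hQ : IsNoncrossingOn J Q) : IsNoncrossingOn S (P ∪ Q) := by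
  obtain ⟨hJS, -, hconv⟩ := mem_intervalsOf.1 hJ
  have hPJ : ∀ V ∈ P, ∀ x ∈ V, x ∈ S ∧ x ∉ J := fun V hV x hx =>
    Finset.mem_sdiff.1 (hP.subset V hV hx)
  have hdisj : ∀ V ∈ P, ∀ W ∈ Q, ∀ x ∈ V, x ∉ W := fun V hV W hW _ hx =>
    Finset.disjoint_left.1 (hP.disjoint_blocks hQ hV hW) hx
  refine ⟨fun V hV => ?_, fun V hV => ?_, fun x hx => ?_, fun V hV W hW x hxV hxW => ?_,
    fun a b c d hab hbc hcd V hV W hW ha hc hb hd => ?_⟩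
  · exact (Finset.mem_union.1 hV).elim (hP.nonempty V) (hQ.nonempty V)
  · exact (Finset.mem_union.1 hV).elim
      (fun hV => (hP.subset V hV).trans Finset.sdiff_subset)
      (fun hV => (hQ.subset V hV).trans hJS)
  · by_cases hxJ : x ∈ J
    · obtain ⟨V, hV, hxV⟩ := hQ.cover x hxJ
      exact ⟨V, Finset.mem_union_right _ hV, hxV⟩
    · obtain ⟨V, hV, hxV⟩ := hP.cover x (Finset.mem_sdiff.2 ⟨hx, hxJ⟩)
      exact ⟨V, Finset.mem_union_left _ hV, hxV⟩
  · obtain hV | hV := Finset.mem_union.1 hV <;> obtain hW | hW := Finset.mem_union.1 hW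
    · exact hP.disjoint V hV W hW x hxV hxW
    · exact absurd hxW (hdisj V hV W hW x hxV)
    · exact absurd hxV (hdisj W hW V hV x hxW)
    · exact hQ.disjoint V hV W hW x hxV hxW
  · obtain hV | hV := Finset.mem_union.1 hV <;> obtain hW | hW := Finset.mem_union.1 hW
    · exact hP.noncrossing a b c d hab hbc hcd V hV W hW ha hc hb hd
    · exact absurd (hconv b (hQ.subset W hW hb) d (hQ.subset W hW hd) c
        (hPJ V hV c hc).1 hbc.le hcd.le) (hPJ V hV c hc).2
    · exact absurd (hconv a (hQ.subset V hV ha) c (hQ.subset V hV hc) b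
        (hPJ W hW b hb).1 hab.le hbc.le) (hPJ W hW b hb).2
    · exact hQ.noncrossing a b c d hab hbc hcd V hV W hW ha hc hb hd

theorem subtreeOn_union (hJ : J ∈ intervalsOf S) (hP : IsNoncrossingOn (S \ J) P)
    (hQ : IsNoncrossingOn J Q) (hV : V ∈ Q) (houter : ∀ W ∈ Q, NestedIn W V) :
    subtreeOn StrictlyNests (P ∪ Q) V = Q := by
  obtain ⟨-, -, hconv⟩ := mem_intervalsOf.1 hJ
  ext W
  rw [mem_subtreeOn_strictlyNests, Finset.mem_union]
  constructor
  · rintro ⟨hW | hW, hWV⟩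
    · obtain ⟨x, hx⟩ := hP.nonempty W hW
      obtain ⟨⟨a, ha, hax⟩, b, hb, hxb⟩ := hWV x hx
      obtain ⟨hxS, hxJ⟩ := Finset.mem_sdiff.1 (hP.subset W hW hx)
      exact absurd (hconv a (hQ.subset V hV ha) b (hQ.subset V hV hb) x hxS hax hxb) hxJ
    · exact hW
  · exact fun hW => ⟨Or.inr hW, houter W hW⟩

end IsNoncrossingOn

theorem sum_noncrossingOn_sum_mem {M : Type*} [AddCommMonoid M] (S : Finset (Fin n))
    (T : Finset (Finset (Fin n)) → Finset (Finset (Fin n)) → M) :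
    ∑ P ∈ noncrossingOn S, ∑ V ∈ P,
        T (P \ subtreeOn StrictlyNests P V) (subtreeOn StrictlyNests P V) =
      ∑ J ∈ intervalsOf S, ∑ Q ∈ irreducibleOn J, ∑ P ∈ noncrossingOn (S \ J), T P Q := by
  simp only [Finset.sum_sigma']
  refine Finset.sum_nbij (fun x => ⟨(subtreeOn StrictlyNests x.1 x.2).sup id,
    subtreeOn StrictlyNests x.1 x.2, x.1 \ subtreeOn StrictlyNests x.1 x.2⟩) ?_ ?_ ?_
    fun _ _ => rfl
  · rintro ⟨P, V⟩ hPV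
    obtain ⟨hP, hV⟩ := Finset.mem_sigma.1 hPV
    rw [mem_noncrossingOn] at hP
    exact Finset.mem_sigma.2 ⟨hP.sup_subtreeOn_mem_intervalsOf hV, Finset.mem_sigma.2
      ⟨hP.subtreeOn_mem_irreducibleOn hV, hP.sdiff_mem_noncrossingOn (subtreeOn_subset _ P V)⟩⟩
  · rintro ⟨P, V⟩ hPV ⟨P', V'⟩ hPV' heq
    obtain ⟨hP, hV⟩ := Finset.mem_sigma.1 hPV
    obtain ⟨-, hV'⟩ := Finset.mem_sigma.1 hPV'
    simp only [Sigma.mk.injEq, heq_eq_eq] at heq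
    obtain ⟨-, hsub, hsdiff⟩ := heq
    obtain rfl : P = P' := by
      rw [← Finset.union_sdiff_of_subset (subtreeOn_subset StrictlyNests P V), hsdiff, hsub,
        Finset.union_sdiff_of_subset (subtreeOn_subset StrictlyNests P' V')]
    exact congrArg (Sigma.mk P) ((mem_noncrossingOn.1 hP).subtreeOn_injOn hV hV' hsub)
  · rintro ⟨J, Q, P⟩ hJQP
    obtain ⟨hJ, hQP⟩ := Finset.mem_sigma.1 hJQP
    obtain ⟨hQ, hP⟩ := Finset.mem_sigma.1 hQP
    obtain ⟨hQ, V, hV, houter⟩ := mem_irreducibleOn.1 hQ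
    rw [mem_noncrossingOn] at hP
    refine ⟨⟨P ∪ Q, V⟩, Finset.mem_sigma.2
      ⟨mem_noncrossingOn.2 (IsNoncrossingOn.union hJ hP hQ), Finset.mem_union_right _ hV⟩, ?_⟩
    simp only [IsNoncrossingOn.subtreeOn_union hJ hP hQ hV houter, hQ.sup_eq,
      Finset.union_sdiff_cancel_right (hP.disjoint_parts hQ)]

theorem noncrossingOn_empty : noncrossingOn (∅ : Finset (Fin n)) = {∅} := by
  ext P
  rw [mem_noncrossingOn, Finset.mem_singleton]
  constructor
  · exact fun hP => Finset.eq_empty_of_forall_notMem fun V hV =>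
      (hP.nonempty V hV).ne_empty (Finset.subset_empty.1 (hP.subset V hV))
  · rintro rfl
    exact ⟨by simp, by simp, by simp, by simp, by simp⟩

theorem singleton_mem_irreducibleOn (hS : S.Nonempty) : {S} ∈ irreducibleOn S := by
  refine mem_irreducibleOn.2 ⟨⟨?_, ?_, ?_, ?_, ?_⟩, S, Finset.mem_singleton_self S, ?_⟩
  · simpa using hS
  · simp
  · simp
  · simp
  · simp
  · simpa using NestedIn.refl S

end NoncrossingPartitions

section MomentPolynomials

open Polynomial

variable {n : ℕ} {K : Type*} [Field K] {L L' : K[X] →ₗ[K] K[X]}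
  {Ψ Ψ' : Finset (Finset (Fin n)) → K[X]} {f f' : Finset (Fin n) → K} {S : Finset (Fin n)}

/-- The moment of the word `S` at time `X`: the noncrossing partitions of `S` are weighted by `f` on
their blocks and by the forest family `Ψ` on their forest of nestings. -/
noncomputable def momentPoly (Ψ : Finset (Finset (Fin n)) → K[X]) (f : Finset (Fin n) → K)
    (S : Finset (Fin n)) : K[X] :=
  ∑ P ∈ noncrossingOn S, (∏ V ∈ P, f V) • Ψ P

/-- The derivative at time `0` of the moment of `S`, to which only irreducible partitions
contribute. -/
noncomputable def generator (Ψ : Finset (Finset (Fin n)) → K[X]) (f : Finset (Fin n) → K)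
    (S : Finset (Fin n)) : K :=
  ∑ Q ∈ irreducibleOn S, (∏ V ∈ Q, f V) * (Ψ Q).coeff 1

theorem momentPoly_empty (hΨ : IsForestFamily StrictlyNests L Ψ) : momentPoly Ψ f ∅ = 1 := by
  rw [momentPoly, noncrossingOn_empty, Finset.sum_singleton, Finset.prod_empty, one_smul, hΨ.empty]

theorem momentPoly_coeff_zero (hΨ : IsForestFamily StrictlyNests L Ψ) (hS : S.Nonempty) :
    (momentPoly Ψ f S).coeff 0 = 0 := by
  rw [momentPoly, finsetSum_coeff]
  refine Finset.sum_eq_zero fun P hP => ?_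
  rw [coeff_smul, hΨ.coeff_zero P ((mem_noncrossingOn.1 hP).parts_nonempty hS), smul_zero]

theorem derivative_momentPoly (hΨ : IsForestFamily StrictlyNests L Ψ) (hL : IsDeltaOperator L)
    (f : Finset (Fin n) → K) (S : Finset (Fin n)) :
    derivative (momentPoly Ψ f S) =
      ∑ J ∈ intervalsOf S, generator Ψ f J • momentPoly Ψ f (S \ J) := by
  let T (P Q : Finset (Finset (Fin n))) : K[X] :=
    ((∏ V ∈ Q, f V) * (Ψ Q).coeff 1) • (∏ V ∈ P, f V) • Ψ P
  have hprune : ∀ P ∈ noncrossingOn S, derivative ((∏ V ∈ P, f V) • Ψ P) =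
      ∑ V ∈ P, T (P \ subtreeOn StrictlyNests P V) (subtreeOn StrictlyNests P V) := by
    intro P hP
    rw [derivative_smul, hΨ.derivative_eq_pruning hL (mem_noncrossingOn.1 hP).isForestOn, pruning,
      Finset.smul_sum]
    refine Finset.sum_congr rfl fun V _ => ?_
    rw [← Finset.prod_sdiff (subtreeOn_subset StrictlyNests P V)]
    simp only [T, smul_smul]
    congr 1
    ring
  calc derivative (momentPoly Ψ f S)
      = ∑ P ∈ noncrossingOn S, ∑ V ∈ P,
          T (P \ subtreeOn StrictlyNests P V) (subtreeOn StrictlyNests P V) := by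
        rw [momentPoly, derivative_sum, Finset.sum_congr rfl hprune]
    _ = ∑ J ∈ intervalsOf S, generator Ψ f J • momentPoly Ψ f (S \ J) := by
        rw [sum_noncrossingOn_sum_mem S T]
        simp only [generator, Finset.sum_smul]
        simp only [momentPoly, Finset.smul_sum, T]

theorem derivative_momentPoly_eq_C_add (hΨ : IsForestFamily StrictlyNests L Ψ)
    (hL : IsDeltaOperator L) (f : Finset (Fin n) → K) (hS : S.Nonempty) :
    derivative (momentPoly Ψ f S) = C (generator Ψ f S) +
      ∑ J ∈ (intervalsOf S).erase S, generator Ψ f J • momentPoly Ψ f (S \ J) := by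
  rw [derivative_momentPoly hΨ hL, ← Finset.add_sum_erase _ _ (self_mem_intervalsOf hS),
    Finset.sdiff_self, momentPoly_empty hΨ, smul_eq_C_mul, mul_one]

theorem sdiff_nonempty_of_mem_erase_intervalsOf {J : Finset (Fin n)}
    (hJ : J ∈ (intervalsOf S).erase S) : (S \ J).Nonempty := by
  rw [Finset.mem_erase, mem_intervalsOf] at hJ
  exact Finset.sdiff_nonempty.2 fun hSJ => hJ.1 (hJ.2.1.antisymm hSJ)

theorem momentPoly_coeff_one (hΨ : IsForestFamily StrictlyNests L Ψ) (hL : IsDeltaOperator L)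
    (f : Finset (Fin n) → K) (hS : S.Nonempty) :
    (momentPoly Ψ f S).coeff 1 = generator Ψ f S := by
  have hrest : ∀ J ∈ (intervalsOf S).erase S,
      (generator Ψ f J • momentPoly Ψ f (S \ J)).coeff 0 = 0 := fun J hJ => by
    rw [coeff_smul, momentPoly_coeff_zero hΨ (sdiff_nonempty_of_mem_erase_intervalsOf hJ),
      smul_zero]
  have hcoeff : (derivative (momentPoly Ψ f S)).coeff 0 = generator Ψ f S := by
    rw [derivative_momentPoly_eq_C_add hΨ hL f hS, coeff_add, coeff_C_zero, finsetSum_coeff,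
      Finset.sum_eq_zero hrest, add_zero]
  simpa [coeff_derivative] using hcoeff

variable [CharZero K]

theorem momentPoly_eq_of_eval_eq (hΨ : IsForestFamily StrictlyNests L Ψ) (hL : IsDeltaOperator L)
    (hΨ' : IsForestFamily StrictlyNests L' Ψ') (hL' : IsDeltaOperator L') {c : K} (hc : c ≠ 0)
    (heval : ∀ S, S.Nonempty → (momentPoly Ψ f S).eval c = (momentPoly Ψ' f' S).eval c)
    (S : Finset (Fin n)) : momentPoly Ψ f S = momentPoly Ψ' f' S := by
  induction S using Finset.strongInduction with
  | _ S ih =>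
  obtain rfl | hS := S.eq_empty_or_nonempty
  · rw [momentPoly_empty hΨ, momentPoly_empty hΨ']
  have hrest : ∀ J ∈ (intervalsOf S).erase S,
      generator Ψ' f' J • momentPoly Ψ' f' (S \ J) = generator Ψ f J • momentPoly Ψ f (S \ J) := by
    intro J hJ
    obtain ⟨hJS, hJ⟩ := Finset.mem_erase.1 hJ
    obtain ⟨hsub, hne, -⟩ := mem_intervalsOf.1 hJ
    rw [← momentPoly_coeff_one hΨ hL f hne, ← momentPoly_coeff_one hΨ' hL' f' hne,
      ih J (hsub.ssubset_of_ne hJS), ih (S \ J) (Finset.sdiff_ssubset hsub hne)]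
  refine eq_of_derivative_eq_C_add (b := generator Ψ' f' S)
    (derivative_momentPoly_eq_C_add hΨ hL f hS) ?_ hc ?_ (heval S hS)
  · rw [derivative_momentPoly_eq_C_add hΨ' hL' f' hS, Finset.sum_congr rfl hrest]
  · rw [momentPoly_coeff_zero hΨ hS, momentPoly_coeff_zero hΨ' hS]

theorem generator_eq_of_eval_eq (hΨ : IsForestFamily StrictlyNests L Ψ) (hL : IsDeltaOperator L)
    (hΨ' : IsForestFamily StrictlyNests L' Ψ') (hL' : IsDeltaOperator L') {c : K} (hc : c ≠ 0)
    (heval : ∀ S, S.Nonempty → (momentPoly Ψ f S).eval c = (momentPoly Ψ' f' S).eval c)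
    (hS : S.Nonempty) : generator Ψ f S = generator Ψ' f' S := by
  rw [← momentPoly_coeff_one hΨ hL f hS, ← momentPoly_coeff_one hΨ' hL' f' hS,
    momentPoly_eq_of_eval_eq hΨ hL hΨ' hL' hc heval]

end MomentPolynomials

section Cumulants

variable {n : ℕ} {K : Type*} [Field K] {S : Finset (Fin n)}

theorem momentPoly_volumePoly_eval_neg_one (f : Finset (Fin n) → K) (S : Finset (Fin n)) :
    (momentPoly (volumePoly K StrictlyNests) (-f) S).eval (-1) =
      ∑ P ∈ noncrossingOn S, (factorialOn StrictlyNests P : K)⁻¹ * ∏ V ∈ P, f V := by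
  rw [momentPoly, Polynomial.eval_finsetSum]
  refine Finset.sum_congr rfl fun P _ => ?_
  have hsign : (-1 : K) ^ P.card * (-1) ^ P.card = 1 := by rw [← mul_pow]; simp
  simp only [Polynomial.eval_smul, volumePoly_eval_neg_one, Pi.neg_apply, Finset.prod_neg,
    smul_eq_mul]
  linear_combination ((factorialOn StrictlyNests P : K)⁻¹ * ∏ V ∈ P, f V) * hsign

theorem generator_volumePoly (f : Finset (Fin n) → K) (hS : S.Nonempty) :
    generator (volumePoly K StrictlyNests) f S = f S := by
  rw [generator, Finset.sum_eq_single {S}]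
  · rw [volumePoly_coeff_one, if_pos (Finset.card_singleton S),
      factorialOn_singleton fun h => h.2 rfl, Finset.prod_singleton]
    simp
  · intro Q hQ hQS
    have hcard : Q.card ≠ 1 := fun h => by
      obtain ⟨V, rfl⟩ := Finset.card_eq_one.1 h
      have hV := (mem_irreducibleOn.1 hQ).1.sup_eq
      rw [Finset.sup_singleton, id] at hV
      exact hQS (by rw [hV])
    rw [volumePoly_coeff_one, if_neg hcard, mul_zero]
  · exact fun h => absurd (singleton_mem_irreducibleOn hS) h

variable [CharZero K]

theorem momentPoly_strictOrderPoly_eval_neg_one (f : Finset (Fin n) → K) (S : Finset (Fin n)) :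
    (momentPoly (strictOrderPoly K StrictlyNests) (-f) S).eval (-1) =
      ∑ P ∈ noncrossingOn S, ∏ V ∈ P, f V := by
  rw [momentPoly, Polynomial.eval_finsetSum]
  refine Finset.sum_congr rfl fun P hP => ?_
  have hsign : (-1 : K) ^ P.card * (-1) ^ P.card = 1 := by rw [← mul_pow]; simp
  simp only [Polynomial.eval_smul, Pi.neg_apply, Finset.prod_neg, smul_eq_mul,
    strictOrderPoly_eval_neg_one (mem_noncrossingOn.1 hP).isForestOn]
  linear_combination (∏ V ∈ P, f V) * hsign

theorem generator_strictOrderPoly_neg (f : Finset (Fin n) → K) (hS : S.Nonempty) :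
    generator (strictOrderPoly K StrictlyNests) (-f) S = -∑ Q ∈ irreducibleOn S,
      (-1) ^ (Q.card - 1) * muruaCoeff K StrictlyNests Q * ∏ V ∈ Q, f V := by
  rw [generator, ← Finset.sum_neg_distrib]
  refine Finset.sum_congr rfl fun Q hQ => ?_
  obtain ⟨k, hk⟩ := Nat.exists_eq_succ_of_ne_zero
    ((mem_irreducibleOn.1 hQ).1.parts_nonempty hS).card_pos.ne'
  simp only [Pi.neg_apply, Finset.prod_neg, strictOrderPoly_coeff_one, hk, Nat.succ_sub_one,
    pow_succ]
  ring

theorem eq_sum_irreducibleOn_of_sum_noncrossingOn_eq {h r : Finset (Fin n) → K}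
    (hmoment : ∀ S : Finset (Fin n), S.Nonempty →
      ∑ P ∈ noncrossingOn S, (factorialOn StrictlyNests P : K)⁻¹ * ∏ V ∈ P, h V =
        ∑ P ∈ noncrossingOn S, ∏ V ∈ P, r V)
    (hS : S.Nonempty) :
    h S = ∑ Q ∈ irreducibleOn S,
      (-1) ^ (Q.card - 1) * muruaCoeff K StrictlyNests Q * ∏ V ∈ Q, r V := by
  have hgen := generator_eq_of_eval_eq (f := -h) (f' := -r) (c := (-1 : K))
    (isForestFamily_volumePoly StrictlyNests) isDeltaOperator_derivative
    (isForestFamily_strictOrderPoly StrictlyNests) isDeltaOperator_forwardDiff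
    (neg_ne_zero.2 one_ne_zero) (fun S hS => ?_) hS
  · rwa [generator_volumePoly _ hS, generator_strictOrderPoly_neg r hS, Pi.neg_apply,
      neg_inj] at hgen
  · rw [momentPoly_volumePoly_eval_neg_one, momentPoly_strictOrderPoly_eval_neg_one, hmoment S hS]

end Cumulants

section Transport

variable {m n : ℕ} {A : Type*} {π : NPart n}

theorem factorialOn_parts (π : NPart n) :
    factorialOn StrictlyNests π.parts = forestFactorial π := by
  rw [factorialOn, forestFactorial]
  refine Finset.prod_congr rfl fun V _ => congrArg Finset.card ?_
  ext W
  simp [mem_subtreeOn_strictlyNests]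

theorem surjCount_parts (π : NPart n) (k : ℕ) :
    surjCount StrictlyNests π.parts k = omegaNestK π k := by
  refine Nat.card_congr (Equiv.subtypeEquivRight fun f => and_comm.trans ?_)
  simp only [strictMaps, StrictlyNests, Set.mem_ofPred_eq, and_imp, ne_eq, Subtype.ext_iff]

theorem muruaCoeff_parts (π : NPart n) : muruaCoeff ℂ StrictlyNests π.parts = omegaNest π := by
  simp only [muruaCoeff, surjCount_parts, omegaNest]

theorem hasOuterBlock_parts_iff (hn : 1 ≤ n) : HasOuterBlock π.parts ↔ IsIrreducibleNC π := by
  constructor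
  · rintro ⟨V, hV, houter⟩
    refine ⟨V, hV, fun i hi => ?_, fun i hi => ?_⟩
    · obtain ⟨W, hW, hiW⟩ := π.exists_mem (Finset.mem_univ i)
      obtain ⟨⟨a, ha, hai⟩, -⟩ := houter W hW i hiW
      rwa [← le_antisymm hai (Fin.le_def.2 (by omega))]
    · obtain ⟨W, hW, hiW⟩ := π.exists_mem (Finset.mem_univ i)
      obtain ⟨-, b, hb, hib⟩ := houter W hW i hiW
      rwa [le_antisymm hib (Fin.le_def.2 (by omega))]
  · rintro ⟨V, hV, hfirst, hlast⟩
    exact ⟨V, hV, fun W _ w _ => ⟨⟨⟨0, hn⟩, hfirst _ rfl, Fin.le_def.2 (Nat.zero_le _)⟩,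
      ⟨⟨n - 1, by omega⟩, hlast _ rfl, Fin.le_def.2 (Nat.le_sub_one_of_lt w.2)⟩⟩⟩

/-- The image of a set of blocks under an order embedding of the ground set. -/
def mapBlocks (e : Fin m ↪o Fin n) (P : Finset (Finset (Fin m))) : Finset (Finset (Fin n)) :=
  P.map (Finset.mapEmbedding e.toEmbedding).toEmbedding

variable {e : Fin m ↪o Fin n}

theorem mem_mapBlocks {P : Finset (Finset (Fin m))} {W : Finset (Fin n)} :
    W ∈ mapBlocks e P ↔ ∃ V ∈ P, V.map e.toEmbedding = W := by
  simp [mapBlocks]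

theorem map_mem_mapBlocks {P : Finset (Finset (Fin m))} {V : Finset (Fin m)} :
    V.map e.toEmbedding ∈ mapBlocks e P ↔ V ∈ P := by
  simp [mapBlocks]

theorem strictlyNests_map_iff {V W : Finset (Fin m)} :
    StrictlyNests (V.map e.toEmbedding) (W.map e.toEmbedding) ↔ StrictlyNests V W := by
  simp [StrictlyNests, NestedIn]

theorem factorialOn_mapBlocks (e : Fin m ↪o Fin n) (P : Finset (Finset (Fin m))) :
    factorialOn StrictlyNests (mapBlocks e P) = factorialOn StrictlyNests P :=
  factorialOn_map _ (fun _ _ => strictlyNests_map_iff) P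

theorem isNoncrossingOn_parts (hπ : IsNoncrossing π) :
    IsNoncrossingOn Finset.univ π.parts where
  nonempty _ hV := π.nonempty_of_mem_parts hV
  subset V _ := Finset.subset_univ V
  cover x _ := π.exists_mem (Finset.mem_univ x)
  disjoint _ hV _ hW _ hxV hxW := π.eq_of_mem_parts hV hW hxV hxW
  noncrossing := hπ

theorem IsNoncrossingOn.mapBlocks {S : Finset (Fin m)} {P : Finset (Finset (Fin m))}
    (hP : IsNoncrossingOn S P) (e : Fin m ↪o Fin n) :
    IsNoncrossingOn (S.map e.toEmbedding) (mapBlocks e P) where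
  nonempty W hW := by
    obtain ⟨V, hV, rfl⟩ := mem_mapBlocks.1 hW
    exact (hP.nonempty V hV).map
  subset W hW := by
    obtain ⟨V, hV, rfl⟩ := mem_mapBlocks.1 hW
    exact Finset.map_subset_map.2 (hP.subset V hV)
  cover x hx := by
    obtain ⟨y, hy, rfl⟩ := Finset.mem_map.1 hx
    obtain ⟨V, hV, hyV⟩ := hP.cover y hy
    exact ⟨_, map_mem_mapBlocks.2 hV, Finset.mem_map_of_mem _ hyV⟩
  disjoint W hW W' hW' x hx hx' := by
    obtain ⟨V, hV, rfl⟩ := mem_mapBlocks.1 hW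
    obtain ⟨V', hV', rfl⟩ := mem_mapBlocks.1 hW'
    obtain ⟨y, hy, rfl⟩ := Finset.mem_map.1 hx
    rw [hP.disjoint V hV V' hV' y hy ((Finset.mem_map' _).1 hx')]
  noncrossing a b c d hab hbc hcd W hW W' hW' ha hc hb hd := by
    obtain ⟨V, hV, rfl⟩ := mem_mapBlocks.1 hW
    obtain ⟨V', hV', rfl⟩ := mem_mapBlocks.1 hW'
    obtain ⟨a, ha', rfl⟩ := Finset.mem_map.1 ha
    obtain ⟨b, hb', rfl⟩ := Finset.mem_map.1 hb
    obtain ⟨c, hc', rfl⟩ := Finset.mem_map.1 hc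
    obtain ⟨d, hd', rfl⟩ := Finset.mem_map.1 hd
    rw [hP.noncrossing a b c d (e.lt_iff_lt.1 hab) (e.lt_iff_lt.1 hbc) (e.lt_iff_lt.1 hcd)
      V hV V' hV' ha' hc' hb' hd']

theorem IsNoncrossingOn.exists_mapBlocks_eq {S : Finset (Fin m)} {P : Finset (Finset (Fin n))}
    (hP : IsNoncrossingOn (S.map e.toEmbedding) P) :
    ∃ Q, IsNoncrossingOn S Q ∧ _root_.mapBlocks e Q = P := by
  classical
  let Q : Finset (Finset (Fin m)) := {V | V.map e.toEmbedding ∈ P}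
  have hQ : ∀ {V}, V ∈ Q ↔ V.map e.toEmbedding ∈ P := by simp [Q]
  have hmap : ∀ W ∈ P, ∃ V : Finset (Fin m), V.map e.toEmbedding = W := fun W hW =>
    let ⟨V, _, hV⟩ := Finset.subset_map_iff.1 (hP.subset W hW)
    ⟨V, hV.symm⟩
  refine ⟨Q, ⟨fun V hV => ?_, fun V hV => ?_, fun x hx => ?_, fun V hV W hW x hxV hxW => ?_,
    fun a b c d hab hbc hcd V hV W hW ha hc hb hd => ?_⟩, ?_⟩
  · exact Finset.map_nonempty.1 (hP.nonempty _ (hQ.1 hV))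
  · exact Finset.map_subset_map.1 (hP.subset _ (hQ.1 hV))
  · obtain ⟨W, hW, hxW⟩ := hP.cover (e x) (Finset.mem_map_of_mem _ hx)
    obtain ⟨V, rfl⟩ := hmap W hW
    exact ⟨V, hQ.2 hW, (Finset.mem_map' e.toEmbedding).1 hxW⟩
  · exact Finset.map_injective e.toEmbedding <| hP.disjoint _ (hQ.1 hV) _ (hQ.1 hW) (e x)
      (Finset.mem_map_of_mem _ hxV) (Finset.mem_map_of_mem _ hxW)
  · exact Finset.map_injective e.toEmbedding <| hP.noncrossing (e a) (e b) (e c) (e d)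
      (e.lt_iff_lt.2 hab) (e.lt_iff_lt.2 hbc) (e.lt_iff_lt.2 hcd) _ (hQ.1 hV) _ (hQ.1 hW)
      (Finset.mem_map_of_mem _ ha) (Finset.mem_map_of_mem _ hc) (Finset.mem_map_of_mem _ hb)
      (Finset.mem_map_of_mem _ hd)
  · ext W
    rw [mem_mapBlocks]
    refine ⟨?_, fun hW => ?_⟩
    · rintro ⟨V, hV, rfl⟩
      exact hQ.1 hV
    · obtain ⟨V, rfl⟩ := hmap W hW
      exact ⟨V, hQ.2 hW, rfl⟩

theorem IsNoncrossingOn.exists_parts_eq {P : Finset (Finset (Fin n))}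
    (hP : IsNoncrossingOn Finset.univ P) : ∃ π : NPart n, IsNoncrossing π ∧ π.parts = P :=
  ⟨Finpartition.ofExistsUnique P (fun V _ => Finset.subset_univ V)
    (fun x hx =>
      let ⟨V, hV, hxV⟩ := hP.cover x hx
      ⟨V, ⟨hV, hxV⟩, fun W ⟨hW, hxW⟩ => hP.disjoint W hW V hV x hxW hxV⟩)
    fun h => Finset.not_nonempty_empty (hP.nonempty ∅ h), hP.noncrossing, rfl⟩

theorem bijOn_parts_isNoncrossing :
    Set.BijOn (fun π : NPart n => π.parts) {π | IsNoncrossing π}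
      (noncrossingOn (Finset.univ : Finset (Fin n))) :=
  ⟨fun _ hπ => mem_noncrossingOn.2 (isNoncrossingOn_parts hπ),
    fun _ _ _ _ h => Finpartition.ext h,
    fun _ hP => (mem_noncrossingOn.1 hP).exists_parts_eq⟩

theorem bijOn_mapBlocks_noncrossingOn (e : Fin m ↪o Fin n) (S : Finset (Fin m)) :
    Set.BijOn (mapBlocks e) (noncrossingOn S) (noncrossingOn (S.map e.toEmbedding)) :=
  ⟨fun _ hP => mem_noncrossingOn.2 ((mem_noncrossingOn.1 hP).mapBlocks e),
    (Finset.map_injective _).injOn, fun _ hP =>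
      let ⟨Q, hQ, hQP⟩ := (mem_noncrossingOn.1 hP).exists_mapBlocks_eq
      ⟨Q, mem_noncrossingOn.2 hQ, hQP⟩⟩

theorem bijOn_parts_isIrreducibleNC (hn : 1 ≤ n) :
    Set.BijOn (fun π : NPart n => π.parts) {π | IsNoncrossing π ∧ IsIrreducibleNC π}
      (irreducibleOn (Finset.univ : Finset (Fin n))) := by
  have hbij := bijOn_parts_isNoncrossing.inter_mapsTo (s₂ := {π : NPart n | IsIrreducibleNC π})
    (t₂ := {P | HasOuterBlock P}) (fun _ hπ => (hasOuterBlock_parts_iff hn).2 hπ)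
    fun _ hπ => (hasOuterBlock_parts_iff hn).1 hπ.2
  rwa [irreducibleOn, Finset.coe_filter]

/-- The family `f` evaluated on the subword of `a` with positions in `V`. -/
noncomputable def subwordApply (f : List A → ℂ) (a : Fin n → A) (V : Finset (Fin n)) : ℂ :=
  f ((V.sort (· ≤ ·)).map a)

theorem subwordApply_univ (f : List A → ℂ) (a : Fin n → A) :
    subwordApply f a Finset.univ = f (List.ofFn a) := by
  rw [subwordApply, Fin.sort_univ, List.ofFn_eq_map]

theorem subwordApply_map (f : List A → ℂ) (a : Fin n → A) (e : Fin m ↪o Fin n)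
    (V : Finset (Fin m)) :
    subwordApply f a (V.map e.toEmbedding) = subwordApply f (a ∘ e) V := by
  have hsort : (V.map e.toEmbedding).sort (· ≤ ·) = (V.sort (· ≤ ·)).map e :=
    (Finset.map_sort _ _ _ _ fun x _ y _ => e.le_iff_le.symm).symm
  rw [subwordApply, hsort, List.map_map, subwordApply]

theorem prod_subwordApply_mapBlocks (f : List A → ℂ) (a : Fin n → A) (e : Fin m ↪o Fin n)
    (π : NPart m) : ∏ V ∈ mapBlocks e π.parts, subwordApply f a V = blockApply f (a ∘ e) π := by
  rw [mapBlocks, Finset.prod_map]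
  exact Finset.prod_congr rfl fun V _ => subwordApply_map f a e V

theorem sum_noncrossingOn_eq_finsum {M : Type*} [AddCommMonoid M] (S : Finset (Fin n))
    (g : Finset (Finset (Fin n)) → M) :
    ∑ P ∈ noncrossingOn S, g P =
      ∑ᶠ π ∈ {π : NPart S.card | IsNoncrossing π}, g (mapBlocks (S.orderEmbOfFin rfl) π.parts) := by
  have hbij := (bijOn_mapBlocks_noncrossingOn (S.orderEmbOfFin rfl) Finset.univ).comp
    bijOn_parts_isNoncrossing
  rw [Finset.map_orderEmbOfFin_univ] at hbij
  rw [← finsum_mem_coe_finset]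
  exact (finsum_mem_eq_of_bijOn _ hbij fun _ _ => rfl).symm

theorem MonotoneMC.subwordApply_prod [Ring A] {φ : A → ℂ} {h : List A → ℂ}
    (hmc : MonotoneMC φ h) (a : Fin n → A) {S : Finset (Fin n)} (hS : S.Nonempty) :
    subwordApply (fun l => φ l.prod) a S = ∑ P ∈ noncrossingOn S,
      (factorialOn StrictlyNests P : ℂ)⁻¹ * ∏ V ∈ P, subwordApply h a V := by
  rw [← Finset.map_orderEmbOfFin_univ S rfl, subwordApply_map, subwordApply_univ,
    hmc S.card hS.card_pos, Finset.map_orderEmbOfFin_univ, sum_noncrossingOn_eq_finsum]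
  simp only [factorialOn_mapBlocks, factorialOn_parts, prod_subwordApply_mapBlocks]

theorem FreeMC.subwordApply_prod [Ring A] {φ : A → ℂ} {r : List A → ℂ}
    (hmc : FreeMC φ r) (a : Fin n → A) {S : Finset (Fin n)} (hS : S.Nonempty) :
    subwordApply (fun l => φ l.prod) a S =
      ∑ P ∈ noncrossingOn S, ∏ V ∈ P, subwordApply r a V := by
  rw [← Finset.map_orderEmbOfFin_univ S rfl, subwordApply_map, subwordApply_univ,
    hmc S.card hS.card_pos, Finset.map_orderEmbOfFin_univ, sum_noncrossingOn_eq_finsum]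
  simp only [prod_subwordApply_mapBlocks]

end Transport

theorem monotone_cumulants_eq_sum_free_cumulants_general {A : Type*} [Ring A] {φ : A → ℂ}
    {h r : List A → ℂ} (hmch : MonotoneMC φ h) (hmcr : FreeMC φ r) {n : ℕ} (hn : 1 ≤ n)
    (a : Fin n → A) :
    h (List.ofFn a) =
      ∑ᶠ π ∈ {π : NPart n | IsNoncrossing π ∧ IsIrreducibleNC π},
        (-1 : ℂ) ^ (π.parts.card - 1) * omegaNest π * blockApply r a π := by
  have huniv : (Finset.univ : Finset (Fin n)).Nonempty := ⟨⟨0, hn⟩, Finset.mem_univ _⟩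
  have hmoment : ∀ S : Finset (Fin n), S.Nonempty →
      ∑ P ∈ noncrossingOn S,
          (factorialOn StrictlyNests P : ℂ)⁻¹ * ∏ V ∈ P, subwordApply h a V =
        ∑ P ∈ noncrossingOn S, ∏ V ∈ P, subwordApply r a V := fun S hS => by
    rw [← hmch.subwordApply_prod a hS, hmcr.subwordApply_prod a hS]
  rw [← subwordApply_univ h a, eq_sum_irreducibleOn_of_sum_noncrossingOn_eq hmoment huniv,
    ← finsum_mem_coe_finset]
  refine (finsum_mem_eq_of_bijOn _ (bijOn_parts_isIrreducibleNC hn) fun π _ => ?_).symm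
  rw [muruaCoeff_parts]
  rfl

/-- Monotone cumulants in terms of free cumulants:
`h_n(a_1,…,a_n) = Σ_{π ∈ NC_irr(n)} (−1)^{|π|−1} ω(t(π)) r_π(a_1,…,a_n)`. -/
theorem monotone_cumulants_eq_sum_free_cumulants
    (A : Type*) [Ring A] [Algebra ℂ A] (φ : A →ₗ[ℂ] ℂ) (hφ : φ 1 = 1)
    (h : List A → ℂ) (hmch : MonotoneMC (fun x => φ x) h)
    (r : List A → ℂ) (hmcr : FreeMC (fun x => φ x) r)
    (n : ℕ) (hn : 1 ≤ n) (a : Fin n → A) :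
    h (List.ofFn a) =
      ∑ᶠ π ∈ {π : NPart n | IsNoncrossing π ∧ IsIrreducibleNC π},
        (-1 : ℂ) ^ (π.parts.card - 1) * omegaNest π * blockApply r a π := by
  exact monotone_cumulants_eq_sum_free_cumulants_general hmch hmcr hn a
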